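/- Let q = p^f be a power of an odd prime p, let n ≥ 7, let Q be a nondegenerate quadratic form on V = F_q^n, and let GO(V,Q) be the group of similitudes of Q; suppose GO(V,Q) is not solvable. Let π be a set of primes with 2 ∈ π, 3 ∉ π and p ∉ π, and let H be a solvable Hall π-subgroup of GO(V,Q). Set G = H·(GO(V,Q) ∩ SL_n(F_q)). Then there exist x, y, z ∈ G such that H ∩ H^x ∩ H^y ∩ H^z is contained in the center of GO(V,Q), i.e. consists of scalar matrices. -/

import Mathlib

open Matrix Pointwise

/-- `H^x = x⁻¹ H x`. -/
def conjBy {G : Type*} [Group G] (H : Subgroup G) (x : G) : Subgroup G :=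
  Subgroup.map ((MulAut.conj x⁻¹).toMonoidHom) H

/-- Hall π-subgroup of the whole group. -/
def IsHallSubgroup {G : Type*} [Group G] (π : Set ℕ) (H : Subgroup G) : Prop :=
  (∀ r : ℕ, r.Prime → r ∣ Nat.card H → r ∈ π) ∧ ∀ r ∈ π, ¬ r ∣ H.index

/-- Hall π-subgroup of the subgroup `K`. -/
def IsHallSubgroupIn {G : Type*} [Group G] (π : Set ℕ) (K H : Subgroup G) : Prop :=
  H ≤ K ∧ (∀ r : ℕ, r.Prime → r ∣ Nat.card H → r ∈ π) ∧ ∀ r ∈ π, ¬ r ∣ H.relIndex K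

/-- The subgroup `SL_n` of `GL_n`. -/
def SLsub (n : ℕ) (F : Type*) [Field F] : Subgroup (GL (Fin n) F) where
  carrier := {g | Matrix.det (g : Matrix (Fin n) (Fin n) F) = 1}
  one_mem' := by simp
  mul_mem' := by
    intro a b ha hb
    simp only [Set.mem_setOf_eq, Units.val_mul, Matrix.det_mul] at *
    rw [ha, hb, one_mul]
  inv_mem' := by
    intro g hg
    simp only [Set.mem_setOf_eq] at *
    have h1 : ((g⁻¹ : GL (Fin n) F) : Matrix (Fin n) (Fin n) F) *
        (g : Matrix (Fin n) (Fin n) F) = 1 := g.inv_mul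
    have := congrArg Matrix.det h1
    rw [Matrix.det_mul, Matrix.det_one, hg, mul_one] at this
    exact this

/-- The group of similitudes of the bilinear form `B` (acting on row vectors). -/
def similitudeGroup {n : ℕ} {F : Type*} [Field F]
    (B : (Fin n → F) → (Fin n → F) → F) : Subgroup (GL (Fin n) F) where
  carrier := {g | ∃ c : Fˣ, ∀ u v : Fin n → F,
    B (Matrix.vecMul u (g : Matrix (Fin n) (Fin n) F))
      (Matrix.vecMul v (g : Matrix (Fin n) (Fin n) F)) = (c : F) * B u v}
  one_mem' := ⟨1, by simp⟩
  mul_mem' := by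
    rintro a b ⟨c, hc⟩ ⟨d, hd⟩
    refine ⟨c * d, fun u v => ?_⟩
    simp only [Units.val_mul, ← Matrix.vecMul_vecMul, hd, hc]
    ring
  inv_mem' := by
    rintro g ⟨c, hc⟩
    refine ⟨c⁻¹, fun u v => ?_⟩
    have h1 : ∀ w : Fin n → F, Matrix.vecMul
        (Matrix.vecMul w ((g⁻¹ : GL (Fin n) F) : Matrix (Fin n) (Fin n) F))
        (g : Matrix (Fin n) (Fin n) F) = w := by
      intro w
      rw [Matrix.vecMul_vecMul, g.inv_mul, Matrix.vecMul_one]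
    have h2 := hc (Matrix.vecMul u ((g⁻¹ : GL (Fin n) F) : Matrix (Fin n) (Fin n) F))
      (Matrix.vecMul v ((g⁻¹ : GL (Fin n) F) : Matrix (Fin n) (Fin n) F))
    rw [h1, h1] at h2
    rw [h2, Units.val_inv_eq_inv_val, inv_mul_cancel_left₀ (by exact_mod_cast c.ne_zero)]

/-- The isometry group of the bilinear form `B` (acting on row vectors). -/
def isometryGroup {n : ℕ} {F : Type*} [Field F]
    (B : (Fin n → F) → (Fin n → F) → F) : Subgroup (GL (Fin n) F) where
  carrier := {g | ∀ u v : Fin n → F,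
    B (Matrix.vecMul u (g : Matrix (Fin n) (Fin n) F))
      (Matrix.vecMul v (g : Matrix (Fin n) (Fin n) F)) = B u v}
  one_mem' := by simp
  mul_mem' := by
    intro a b ha hb u v
    simp only [Set.mem_setOf_eq] at ha hb
    simp only [Units.val_mul, ← Matrix.vecMul_vecMul]
    rw [hb, ha]
  inv_mem' := by
    intro g hg u v
    have h1 : ∀ w : Fin n → F, Matrix.vecMul
        (Matrix.vecMul w ((g⁻¹ : GL (Fin n) F) : Matrix (Fin n) (Fin n) F))
        (g : Matrix (Fin n) (Fin n) F) = w := by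
      intro w
      rw [Matrix.vecMul_vecMul, g.inv_mul, Matrix.vecMul_one]
    have h2 := hg (Matrix.vecMul u ((g⁻¹ : GL (Fin n) F) : Matrix (Fin n) (Fin n) F))
      (Matrix.vecMul v ((g⁻¹ : GL (Fin n) F) : Matrix (Fin n) (Fin n) F))
    rw [h1, h1] at h2
    exact h2.symm

/-- The group of similitudes of the quadratic form `Q` (acting on row vectors). -/
def qSimilitudeGroup {n : ℕ} {F : Type*} [Field F]
    (Q : (Fin n → F) → F) : Subgroup (GL (Fin n) F) where
  carrier := {g | ∃ c : Fˣ, ∀ v : Fin n → F,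
    Q (Matrix.vecMul v (g : Matrix (Fin n) (Fin n) F)) = (c : F) * Q v}
  one_mem' := ⟨1, by simp⟩
  mul_mem' := by
    rintro a b ⟨c, hc⟩ ⟨d, hd⟩
    refine ⟨c * d, fun v => ?_⟩
    simp only [Units.val_mul, ← Matrix.vecMul_vecMul, hd, hc]
    ring
  inv_mem' := by
    rintro g ⟨c, hc⟩
    refine ⟨c⁻¹, fun v => ?_⟩
    have h1 : ∀ w : Fin n → F, Matrix.vecMul
        (Matrix.vecMul w ((g⁻¹ : GL (Fin n) F) : Matrix (Fin n) (Fin n) F))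
        (g : Matrix (Fin n) (Fin n) F) = w := by
      intro w
      rw [Matrix.vecMul_vecMul, g.inv_mul, Matrix.vecMul_one]
    have h2 := hc (Matrix.vecMul v ((g⁻¹ : GL (Fin n) F) : Matrix (Fin n) (Fin n) F))
    rw [h1] at h2
    rw [h2, Units.val_inv_eq_inv_val, inv_mul_cancel_left₀ (by exact_mod_cast c.ne_zero)]

/-- The unitary group `GU_n` with respect to the field automorphism `φ`. -/
def GUgrp (n : ℕ) {K : Type*} [Field K] (φ : K →+* K) : Subgroup (GL (Fin n) K) where
  carrier := {g | ((g : Matrix (Fin n) (Fin n) K).map φ)ᵀ * (g : Matrix (Fin n) (Fin n) K) = 1}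
  one_mem' := by
    simp [Matrix.map_one φ φ.map_zero φ.map_one]
  mul_mem' := by
    intro a b ha hb
    simp only [Set.mem_setOf_eq, Units.val_mul, Matrix.map_mul, Matrix.transpose_mul] at *
    calc ((b : Matrix (Fin n) (Fin n) K).map φ)ᵀ * ((a : Matrix (Fin n) (Fin n) K).map φ)ᵀ *
          ((a : Matrix (Fin n) (Fin n) K) * (b : Matrix (Fin n) (Fin n) K))
        = ((b : Matrix (Fin n) (Fin n) K).map φ)ᵀ *
          (((a : Matrix (Fin n) (Fin n) K).map φ)ᵀ * (a : Matrix (Fin n) (Fin n) K)) *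
          (b : Matrix (Fin n) (Fin n) K) := by noncomm_ring
      _ = 1 := by rw [ha, mul_one, hb]
  inv_mem' := by
    intro g hg
    simp only [Set.mem_setOf_eq] at *
    have hcomm : (g : Matrix (Fin n) (Fin n) K) * ((g : Matrix (Fin n) (Fin n) K).map φ)ᵀ = 1 :=
      mul_eq_one_comm.mp hg
    have h1 : ((g : Matrix (Fin n) (Fin n) K) * ((g⁻¹ : GL (Fin n) K) : Matrix (Fin n) (Fin n) K)).map φ = 1 := by
      rw [g.mul_inv]
      exact Matrix.map_one φ φ.map_zero φ.map_one
    rw [Matrix.map_mul] at h1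
    have h2 := congrArg Matrix.transpose h1
    rw [Matrix.transpose_mul, Matrix.transpose_one] at h2
    calc (((g⁻¹ : GL (Fin n) K) : Matrix (Fin n) (Fin n) K).map φ)ᵀ *
          ((g⁻¹ : GL (Fin n) K) : Matrix (Fin n) (Fin n) K)
        = (((g⁻¹ : GL (Fin n) K) : Matrix (Fin n) (Fin n) K).map φ)ᵀ *
          (((g : Matrix (Fin n) (Fin n) K).map φ)ᵀ * (g : Matrix (Fin n) (Fin n) K)) *
          ((g⁻¹ : GL (Fin n) K) : Matrix (Fin n) (Fin n) K) := by rw [hg, mul_one]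
      _ = ((((g⁻¹ : GL (Fin n) K) : Matrix (Fin n) (Fin n) K).map φ)ᵀ *
          ((g : Matrix (Fin n) (Fin n) K).map φ)ᵀ) *
          ((g : Matrix (Fin n) (Fin n) K) * ((g⁻¹ : GL (Fin n) K) : Matrix (Fin n) (Fin n) K)) := by
            noncomm_ring
      _ = 1 := by rw [h2, g.mul_inv, mul_one]


section KeyThree

/-- A finite group of order prime to 3 acting on a three-element set fixes a point. -/
lemma exists_fixed_of_three {W α : Type*} [Group W] [Finite W] (φ : W →* Equiv.Perm α)
    (h3 : ¬ 3 ∣ Nat.card W) (x1 x2 x3 : α) (h12 : x1 ≠ x2) (h13 : x1 ≠ x3) (h23 : x2 ≠ x3)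
    (hs : ∀ w x, (x = x1 ∨ x = x2 ∨ x = x3) → (φ w x = x1 ∨ φ w x = x2 ∨ φ w x = x3)) :
    ∃ x, (x = x1 ∨ x = x2 ∨ x = x3) ∧ ∀ w, φ w x = x := by
  classical
  let _ : MulAction W α := MulAction.compHom α φ
  have hsm : ∀ (w : W) (x : α), w • x = φ w x := fun w x => rfl
  have hsub : ∀ x, (x = x1 ∨ x = x2 ∨ x = x3) → ∀ y ∈ MulAction.orbit W x,
      y = x1 ∨ y = x2 ∨ y = x3 := by
    rintro x hx y ⟨w, rfl⟩
    exact hs w x hx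
  have hnot : ∀ x, (x = x1 ∨ x = x2 ∨ x = x3) →
      ¬ (x1 ∈ MulAction.orbit W x ∧ x2 ∈ MulAction.orbit W x ∧ x3 ∈ MulAction.orbit W x) := by
    rintro x hx ⟨h1, h2, h3'⟩
    have : MulAction.orbit W x = {x1, x2, x3} := by
      ext y
      constructor
      · intro hy; simpa using hsub x hx y hy
      · rintro (rfl | rfl | rfl) <;> assumption
    apply h3
    have hc : (MulAction.orbit W x).ncard = 3 := by
      rw [this]
      exact Set.ncard_eq_three.mpr ⟨x1, x2, x3, h12, h13, h23, rfl⟩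
    rw [← hc, ← MulAction.index_stabilizer W x]
    exact Subgroup.index_dvd_card _
  have hfix : ∀ x, (x = x1 ∨ x = x2 ∨ x = x3) → (∀ y, (y = x1 ∨ y = x2 ∨ y = x3) → y ≠ x →
      y ∉ MulAction.orbit W x) → ∃ x, (x = x1 ∨ x = x2 ∨ x = x3) ∧ ∀ w, φ w x = x := by
    intro x hx hy
    refine ⟨x, hx, fun w => ?_⟩
    by_contra hne
    exact hy _ (hs w x hx) hne ⟨w, rfl⟩
  have hsymm : ∀ x y : α, x ∈ MulAction.orbit W y → y ∈ MulAction.orbit W x := by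
    intro x y h; exact MulAction.mem_orbit_symm.mp h
  have htr : ∀ x y z : α, x ∈ MulAction.orbit W y → y ∈ MulAction.orbit W z →
      x ∈ MulAction.orbit W z := by
    intro x y z h h'
    rw [← MulAction.orbit_eq_iff] at *
    rw [h, h']
  have hself : ∀ x : α, x ∈ MulAction.orbit W x := fun x => MulAction.mem_orbit_self x
  by_cases a12 : x2 ∈ MulAction.orbit W x1
  · have a13 : x3 ∉ MulAction.orbit W x1 := fun h =>
      hnot x1 (Or.inl rfl) ⟨hself _, a12, h⟩
    apply hfix x3 (by simp)
    rintro y (rfl | rfl | rfl) hne hy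
    · exact a13 (hsymm _ _ hy)
    · exact a13 (htr _ _ _ (hsymm _ _ hy) a12)
    · exact hne rfl
  · by_cases a13 : x3 ∈ MulAction.orbit W x1
    · apply hfix x2 (by simp)
      rintro y (rfl | rfl | rfl) hne hy
      · exact a12 (hsymm _ _ hy)
      · exact hne rfl
      · exact a12 (htr _ _ _ (hsymm _ _ hy) a13)
    · apply hfix x1 (by simp)
      rintro y (rfl | rfl | rfl) hne hy
      · exact hne rfl
      · exact a12 hy
      · exact a13 hy

open scoped commutatorElement in
/-- A nontrivial abelian normal subgroup inside the commutator subgroup. -/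
lemma exists_abelian_normal {W : Type*} [Group W] [Group.IsSolvable W] (hna : ∃ a b : W, a * b ≠ b * a) :
    ∃ M : Subgroup W, M.Normal ∧ M ≤ commutator W ∧ (∀ x ∈ M, ∀ y ∈ M, x * y = y * x) ∧
      ∃ m ∈ M, m ≠ 1 := by
  classical
  have hex : ∃ k, derivedSeries W k = ⊥ := Group.IsSolvable.solvable
  obtain ⟨a, b, hab⟩ := hna
  set k := Nat.find hex with hk
  have hkb : derivedSeries W k = ⊥ := Nat.find_spec hex
  have h0 : k ≠ 0 := by
    intro h
    rw [h, derivedSeries_zero] at hkb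
    have ha : a ∈ (⊤ : Subgroup W) := trivial
    rw [hkb, Subgroup.mem_bot] at ha
    apply hab; simp [ha]
  have h1 : k ≠ 1 := by
    intro h
    rw [h, derivedSeries_one] at hkb
    have ha : ⁅a, b⁆ ∈ commutator W :=
      Subgroup.commutator_mem_commutator (Subgroup.mem_top a) (Subgroup.mem_top b)
    rw [hkb, Subgroup.mem_bot, commutatorElement_eq_one_iff_mul_comm] at ha
    exact hab ha
  obtain ⟨j, hj⟩ : ∃ j, k = j + 1 := ⟨k - 1, by omega⟩
  have hjn : derivedSeries W j ≠ ⊥ := fun h => by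
    have := Nat.find_min' hex h
    omega
  refine ⟨derivedSeries W j, inferInstance, ?_, ?_, ?_⟩
  · rw [← derivedSeries_one]
    exact derivedSeries_antitone W (by omega)
  · intro x hx y hy
    rw [hj, derivedSeries_succ] at hkb
    have : ⁅x, y⁆ ∈ (⊥ : Subgroup W) := by
      rw [← hkb]; exact Subgroup.commutator_mem_commutator hx hy
    rw [Subgroup.mem_bot, commutatorElement_eq_one_iff_mul_comm] at this
    exact this
  · by_contra hcon
    push Not at hcon
    exact hjn ((Subgroup.eq_bot_iff_forall _).mpr hcon)

variable {F X : Type*} [Field F] [AddCommGroup X] [Module F X] [FiniteDimensional F X]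

/-- An isometry of determinant one in dimension three has a fixed vector. -/
lemma exists_axis (hX : Module.finrank F X = 3) (B : LinearMap.BilinForm F X)
    (hs : ∀ x y, B x y = B y x) (hnd : ∀ y, (∀ x, B y x = 0) → y = 0) (h2 : (2 : F) ≠ 0)
    (m : X →ₗ[F] X) (hm : ∀ x y, B (m x) (m y) = B x y) (hdet : LinearMap.det m = 1) :
    ∃ u, u ≠ 0 ∧ m u = u := by
  let e := Module.finBasisOfFinrankEq F X hX
  set A := LinearMap.toMatrix e e m with hA
  set G := LinearMap.BilinForm.toMatrix e B with hG
  have hGd : G.det ≠ 0 := by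
    rw [← LinearMap.BilinForm.nondegenerate_iff_det_ne_zero]
    constructor
    · intro y hy; exact hnd y hy
    · intro y hy; exact hnd y (fun x => by rw [hs]; exact hy x)
  have hAd : A.det = 1 := by rw [hA, LinearMap.det_toMatrix]; exact hdet
  have hAG : Aᵀ * G * A = G := by
    rw [hA, hG, ← LinearMap.BilinForm.toMatrix_comp]
    congr 1
    ext x y
    simp [LinearMap.BilinForm.comp_apply, hm]
  have h1 : (A - 1)ᵀ * G * A = -(G * (A - 1)) := by
    rw [Matrix.transpose_sub, sub_mul, sub_mul, hAG]
    simp [mul_sub]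
  have h3 := congrArg Matrix.det h1
  rw [Matrix.det_mul, Matrix.det_mul, Matrix.det_transpose, Matrix.det_neg, Matrix.det_mul,
    hAd] at h3
  have h4 : (2 : F) * (G.det * (A - 1).det) = 0 := by
    simp at h3
    linear_combination h3
  have h5 : (A - 1).det = 0 := by
    rcases mul_eq_zero.mp h4 with h | h
    · exact absurd h h2
    · exact (mul_eq_zero.mp h).resolve_left hGd
  have h6 : LinearMap.det (m - 1) = 0 := by
    rw [← LinearMap.det_toMatrix e, map_sub, LinearMap.toMatrix_one]
    exact h5
  have h7 : LinearMap.ker (m - 1) ≠ ⊥ := by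
    intro hk
    rw [← LinearMap.isUnit_iff_ker_eq_bot] at hk
    have := hk.map (LinearMap.det : (X →ₗ[F] X) →* F)
    rw [h6] at this
    exact not_isUnit_zero this
  obtain ⟨u, hu, hu0⟩ := Submodule.exists_mem_ne_zero_of_ne_bot h7
  refine ⟨u, hu0, ?_⟩
  simpa [sub_eq_zero] using hu

/-- An element of determinant one and of finite order prime to the characteristic which fixes
two independent vectors of a 3-space is trivial. -/
lemma eq_one_of_two_fixed (hX : Module.finrank F X = 3)
    (m : X →ₗ[F] X) (hdet : LinearMap.det m = 1) (N : ℕ) (hN : m ^ N = 1) (hNF : (N : F) ≠ 0)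
    (u v : X) (hu : m u = u) (hv : m v = v) (huv : LinearIndependent F ![u, v]) : m = 1 := by
  have hk : 2 ≤ Module.finrank F (LinearMap.ker (m - 1)) := by
    have hsp : Submodule.span F (Set.range ![u, v]) ≤ LinearMap.ker (m - 1) := by
      rw [Submodule.span_le]
      rintro _ ⟨i, rfl⟩
      fin_cases i <;> simp [hu, hv]
    have := Submodule.finrank_mono hsp
    rw [finrank_span_eq_card huv] at this
    simpa using this
  have hr := LinearMap.finrank_range_add_finrank_ker (m - 1)
  have hr1 : Module.finrank F (LinearMap.range (m - 1)) ≤ 1 := by omega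
  obtain ⟨⟨l, hl⟩, hl'⟩ := finrank_le_one_iff.mp hr1
  have hex : ∀ x, ∃ c : F, c • l = m x - x := by
    intro x
    obtain ⟨c, hc⟩ := hl' ⟨(m - 1) x, LinearMap.mem_range_self _ _⟩
    refine ⟨c, ?_⟩
    simpa using congrArg Subtype.val hc
  by_cases hl0 : l = 0
  · ext x
    obtain ⟨c, hc⟩ := hex x
    rw [hl0, smul_zero] at hc
    simpa using (sub_eq_zero.mp hc.symm)
  choose f hf using hex
  let φ : Module.Dual F X :=
    { toFun := f
      map_add' := by
        intro x y
        apply smul_left_injective F hl0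
        simp only [hf, add_smul, map_add]; abel
      map_smul' := by
        intro c x
        apply smul_left_injective F hl0
        simp only [hf, map_smul, RingHom.id_apply, smul_eq_mul, mul_smul, smul_sub] }
  have hmφ : ∀ x, m x = x + φ x • l := by
    intro x
    have := hf x
    change m x = x + f x • l
    rw [this]; abel
  have hmt : m = LinearMap.transvection φ l := by
    ext x; rw [hmφ]; rfl
  have hφl : φ l = 0 := by
    rw [hmt, LinearMap.transvection.det] at hdet
    linear_combination hdet
  have hpow : ∀ k : ℕ, ∀ x, (m ^ k) x = x + ((k : F) * φ x) • l := by
    intro k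
    induction k with
    | zero => intro x; simp
    | succ k ih =>
      intro x
      rw [pow_succ', Module.End.mul_apply, ih, map_add, map_smul, hmφ x, hmφ l, hφl]
      push_cast
      simp only [zero_smul, add_zero, add_mul, one_mul, add_smul]
      abel
  ext x
  have := hpow N x
  rw [hN] at this
  have h0 : ((N : F) * φ x) • l = 0 := by
    simpa using this
  have h1 : φ x = 0 := by
    rcases smul_eq_zero.mp h0 with h | h
    · exact (mul_eq_zero.mp h).resolve_left hNF
    · exact absurd h hl0
  rw [hmφ, h1]; simp

end KeyThree
section KeyThreeMain

variable {F X : Type*} [Field F] [AddCommGroup X] [Module F X] [FiniteDimensional F X]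

/-- Reflection formulas preserve the form. -/
lemma refl_isom (B : LinearMap.BilinForm F X) (hs : ∀ x y, B x y = B y x) (a : X)
    (ha : B a a ≠ 0) (x y : X) :
    B (x - (2 * B a x / B a a) • a) (y - (2 * B a y / B a a) • a) = B x y := by
  simp only [map_sub, map_smul, LinearMap.sub_apply, LinearMap.smul_apply, smul_eq_mul]
  rw [hs x a]
  field_simp
  ring

/-- No solvable group of order prime to 3 and to the characteristic is generated by three
reflections in independent vectors forming a connected diagram. -/
theorem key3 (hX : Module.finrank F X = 3) (B : LinearMap.BilinForm F X)
    (hs : ∀ x y, B x y = B y x) (h2 : (2 : F) ≠ 0) (a b c : X)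
    (hspan : ∀ S : Submodule F X, a ∈ S → b ∈ S → c ∈ S → S = ⊤)
    (haa : B a a ≠ 0) (hbb : B b b ≠ 0) (hcc : B c c ≠ 0) (hab : B a b ≠ 0) (hbc : B b c ≠ 0)
    (ra rb rc : X ≃ₗ[F] X) (hra : ∀ x, ra x = x - (2 * B a x / B a a) • a)
    (hrb : ∀ x, rb x = x - (2 * B b x / B b b) • b)
    (hrc : ∀ x, rc x = x - (2 * B c x / B c c) • c)
    (W : Subgroup (X ≃ₗ[F] X)) (hW : W = Subgroup.closure {ra, rb, rc})
    [Finite W] [Group.IsSolvable W] (h3 : ¬ 3 ∣ Nat.card W) (hp : (Nat.card W : F) ≠ 0) :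
    False := by
  classical
  have hraW : ra ∈ W := by rw [hW]; exact Subgroup.subset_closure (by simp)
  have hrbW : rb ∈ W := by rw [hW]; exact Subgroup.subset_closure (by simp)
  have hrcW : rc ∈ W := by rw [hW]; exact Subgroup.subset_closure (by simp)
  have hinv : ∀ w ∈ W, ∀ x y, B (w x) (w y) = B x y := by
    intro w hw
    rw [hW] at hw
    induction hw using Subgroup.closure_induction with
    | mem w hw =>
      rcases hw with rfl | rfl | rfl
      · intro x y; rw [hra, hra, refl_isom B hs a haa]
      · intro x y; rw [hrb, hrb, refl_isom B hs b hbb]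
      · intro x y; rw [hrc, hrc, refl_isom B hs c hcc]
    | one => intro x y; rfl
    | mul v w _ _ hv hw => intro x y; rw [LinearEquiv.mul_apply, LinearEquiv.mul_apply, hv, hw]
    | inv w _ hw =>
      intro x y
      rw [← hw]
      simp [← LinearEquiv.mul_apply]
  have hrad : ∀ w ∈ W, ∀ y, (∀ x, B y x = 0) → w y = y := by
    intro w hw y hy
    have hy' : ∀ x, B x y = 0 := fun x => by rw [hs]; exact hy x
    rw [hW] at hw
    induction hw using Subgroup.closure_induction with
    | mem w hw =>
      rcases hw with rfl | rfl | rfl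
      · rw [hra, hy']; simp
      · rw [hrb, hy']; simp
      · rw [hrc, hy']; simp
    | one => rfl
    | mul v w _ _ hv hw => rw [LinearEquiv.mul_apply, hw, hv]
    | inv w _ hw =>
      calc w⁻¹ y = w⁻¹ (w y) := by rw [hw]
        _ = y := by simp [← LinearEquiv.mul_apply]
  haveI : Fintype W := Fintype.ofFinite W
  -- no fixed vectors
  have hnofix : ∀ y, (∀ w ∈ W, w y = y) → y = 0 := by
    intro y hy
    let E : X →ₗ[F] X := ∑ w : W, ((w : X ≃ₗ[F] X) : X →ₗ[F] X)
    have hE : ∀ x, E x = ∑ w : W, (w : X ≃ₗ[F] X) x := by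
      intro x; simp [E, LinearMap.sum_apply]
    have hEr : ∀ r ∈ W, ∀ x, E (r x) = E x := by
      intro r hr x
      rw [hE, hE]
      exact Fintype.sum_equiv (Equiv.mulRight (⟨r, hr⟩ : W)) _ _ (fun w => rfl)
    have hkill : ∀ r ∈ W, ∀ x, r x = -x → x ∈ LinearMap.ker E := by
      intro r hr x hx
      have := hEr r hr x
      rw [hx, map_neg] at this
      have h : (2 : F) • E x = 0 := by
        rw [two_smul]; nth_rewrite 1 [← this]; simp
      exact (smul_eq_zero.mp h).resolve_left h2
    have hneg : ∀ v : X, B v v ≠ 0 → v - (2 * B v v / B v v) • v = -v := by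
      intro v hv
      rw [mul_div_assoc, div_self hv, mul_one, two_smul]; abel
    have htop := hspan (LinearMap.ker E) (hkill ra hraW a (by rw [hra, hneg a haa]))
      (hkill rb hrbW b (by rw [hrb, hneg b hbb])) (hkill rc hrcW c (by rw [hrc, hneg c hcc]))
    have h0 : E y = 0 := by
      have : y ∈ LinearMap.ker E := by rw [htop]; trivial
      exact this
    rw [hE, Finset.sum_congr rfl (fun (w : W) _ => hy w.1 w.2)] at h0
    simp only [Finset.sum_const, Finset.card_univ] at h0
    rw [← Nat.cast_smul_eq_nsmul F, ← Nat.card_eq_fintype_card] at h0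
    exact (smul_eq_zero.mp h0).resolve_left hp
  have hnd : ∀ y, (∀ x, B y x = 0) → y = 0 := fun y hy => hnofix y (fun w hw => hrad w hw y hy)
  have hsmall : ∀ u v : X, (∀ S : Submodule F X, u ∈ S → v ∈ S → S = ⊤) → False := by
    intro u v h
    have h1 := h (Submodule.span F (Set.range ![u, v]))
      (Submodule.subset_span ⟨0, rfl⟩) (Submodule.subset_span ⟨1, rfl⟩)
    have h2 := finrank_range_le_card (R := F) ![u, v]
    rw [Set.finrank, h1, finrank_top, hX] at h2
    simp at h2
  -- no invariant lines
  have hnoline : ∀ u, u ≠ 0 → (∀ w ∈ W, ∃ k : F, w u = k • u) → False := by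
    intro u hu hl
    have hpar : ∀ v : X, ∀ r ∈ W, (∀ x, r x = x - (2 * B v x / B v v) • v) → B v v ≠ 0 →
        B v u ≠ 0 → ∃ k : F, v = k • u := by
      intro v r hr hrv hv hvu
      obtain ⟨k, hk⟩ := hl r hr
      rw [hrv] at hk
      have ht : (2 * B v u / B v v) ≠ 0 := div_ne_zero (mul_ne_zero h2 hvu) hv
      refine ⟨(2 * B v u / B v v)⁻¹ * (1 - k), ?_⟩
      rw [mul_smul, sub_smul, one_smul, ← hk, sub_sub_cancel, smul_smul, inv_mul_cancel₀ ht,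
        one_smul]
    have hbu : B b u = 0 := by
      by_contra hbu
      obtain ⟨k, hk⟩ := hpar b rb hrbW hrb hbb hbu
      have hau : B a u ≠ 0 := by
        intro h; rw [hk, map_smul, h] at hab; simp at hab
      have hcu : B c u ≠ 0 := by
        intro h; rw [hs, hk, map_smul, h] at hbc; simp at hbc
      obtain ⟨k1, hk1⟩ := hpar a ra hraW hra haa hau
      obtain ⟨k2, hk2⟩ := hpar c rc hrcW hrc hcc hcu
      exact hsmall u u (fun S hS _ => hspan S (hk1 ▸ S.smul_mem _ hS) (hk ▸ S.smul_mem _ hS)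
        (hk2 ▸ S.smul_mem _ hS))
    have hau : B a u = 0 := by
      by_contra hau
      obtain ⟨k, hk⟩ := hpar a ra hraW hra haa hau
      rw [hs, hk, map_smul, hbu] at hab; simp at hab
    have hcu : B c u = 0 := by
      by_contra hcu
      obtain ⟨k, hk⟩ := hpar c rc hrcW hrc hcc hcu
      rw [hk, map_smul, hbu] at hbc; simp at hbc
    apply hu
    apply hnd
    intro x
    have htop := hspan (LinearMap.ker (B u)) (by rw [LinearMap.mem_ker, hs]; exact hau)
      (by rw [LinearMap.mem_ker, hs]; exact hbu) (by rw [LinearMap.mem_ker, hs]; exact hcu)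
    have : x ∈ LinearMap.ker (B u) := by rw [htop]; trivial
    exact this
  -- noncommuting
  have hna : ∃ x y : W, x * y ≠ y * x := by
    refine ⟨⟨ra, hraW⟩, ⟨rb, hrbW⟩, fun h => ?_⟩
    have h1 : ra (rb a) = rb (ra a) := by
      have := congrArg (fun w : W => (w : X ≃ₗ[F] X) a) h
      simpa using this
    have hneg : ra a = -a := by
      rw [hra, mul_div_assoc, div_self haa, mul_one, two_smul]; abel
    rw [hneg, map_neg, hra, hrb] at h1
    set t := 2 * B b a / B b b with ht
    have ht0 : t ≠ 0 := div_ne_zero (mul_ne_zero h2 (by rw [hs]; exact hab)) hbb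
    set s := 2 * B a (a - t • b) / B a a with hs'
    have h4 : (2 * t) • b = (2 - s) • a := by
      have e : (2 * t) • b - (2 - s) • a = -((a - t • b - s • a) - -(a - t • b)) := by module
      rw [h1, sub_self, neg_zero] at e
      exact sub_eq_zero.mp e
    have h5 : b = ((2 * t)⁻¹ * (2 - s)) • a := by
      rw [mul_smul, ← h4, smul_smul, inv_mul_cancel₀ (mul_ne_zero h2 ht0), one_smul]
    exact hsmall a c (fun S ha hc => hspan S ha (h5 ▸ S.smul_mem _ ha) hc)
  obtain ⟨M, hMn, hMc, hMab, m1, hm1M, hm1⟩ := exists_abelian_normal hna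
  have hdet : ∀ m ∈ M, LinearMap.det ((m : X ≃ₗ[F] X) : X →ₗ[F] X) = 1 := by
    intro m hm
    have := Abelianization.commutator_subset_ker
      ((LinearEquiv.det : (X ≃ₗ[F] X) →* Fˣ).comp W.subtype) (hMc hm)
    rw [MonoidHom.mem_ker] at this
    have := congrArg Units.val this
    simpa using this
  have htwo : ∀ m ∈ M, ∀ u v, (m : X ≃ₗ[F] X) u = u → (m : X ≃ₗ[F] X) v = v →
      LinearIndependent F ![u, v] → m = 1 := by
    intro m hm u v hu hv huv
    have hdvd : orderOf m ∣ Nat.card W := orderOf_dvd_natCard m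
    have hN : ((orderOf m : ℕ) : F) ≠ 0 := by
      intro h
      obtain ⟨k, hk⟩ := hdvd
      apply hp
      rw [hk]; push_cast; rw [h, zero_mul]
    have hcoe : ∀ k : ℕ, (((m : X ≃ₗ[F] X) : X →ₗ[F] X)) ^ k =
        (((m ^ k : W) : X ≃ₗ[F] X) : X →ₗ[F] X) := by
      intro k
      induction k with
      | zero => rfl
      | succ k ih => rw [pow_succ, ih, pow_succ]; rfl
    have := eq_one_of_two_fixed hX ((m : X ≃ₗ[F] X) : X →ₗ[F] X) (hdet m hm) (orderOf m)
      (by rw [hcoe, pow_orderOf_eq_one]; rfl) hN u v hu hv huv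
    apply Subtype.ext
    apply LinearEquiv.ext
    intro x
    exact congrArg (fun f : X →ₗ[F] X => f x) this
  -- axes
  have haxis : ∀ m ∈ M, m ≠ 1 → ∃ u, u ≠ 0 ∧ (m : X ≃ₗ[F] X) u = u ∧
      (∀ v, (m : X ≃ₗ[F] X) v = v → ∃ k : F, v = k • u) ∧ B u u ≠ 0 := by
    intro m hm hne
    obtain ⟨u, hu0, hu⟩ := exists_axis hX B hs hnd h2 ((m : X ≃ₗ[F] X) : X →ₗ[F] X)
      (fun x y => hinv m m.2 x y) (hdet m hm)
    have hu : (m : X ≃ₗ[F] X) u = u := hu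
    have hline : ∀ v, (m : X ≃ₗ[F] X) v = v → ∃ k : F, v = k • u := by
      intro v hv
      by_contra hcon
      apply hne
      apply htwo m hm u v hu hv
      rw [LinearIndependent.pair_iff' hu0]
      intro k hk
      exact hcon ⟨k, hk.symm⟩
    refine ⟨u, hu0, hu, hline, fun huu => hu0 (hnd u fun x => ?_)⟩
    -- average over the cyclic group generated by m
    let N := orderOf m
    let y := ∑ k ∈ Finset.range N, ((m ^ k : W) : X ≃ₗ[F] X) x
    have hy : (m : X ≃ₗ[F] X) y = y := by
      have h1 : (m : X ≃ₗ[F] X) y = ∑ k ∈ Finset.range N, ((m ^ (k + 1) : W) : X ≃ₗ[F] X) x := by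
        simp only [y, map_sum]
        refine Finset.sum_congr rfl (fun k _ => ?_)
        rw [pow_succ']; rfl
      have h2 := Finset.sum_range_succ' (fun k => ((m ^ k : W) : X ≃ₗ[F] X) x) N
      rw [Finset.sum_range_succ] at h2
      have h3 : m ^ N = m ^ 0 := by rw [pow_zero]; exact pow_orderOf_eq_one m
      rw [h3] at h2
      rw [h1]
      exact (add_right_cancel h2).symm
    obtain ⟨k, hk⟩ := hline y hy
    have hpu : ∀ j : ℕ, ((m ^ j : W) : X ≃ₗ[F] X) u = u := by
      intro j
      induction j with
      | zero => rfl
      | succ j ih =>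
        rw [pow_succ']
        change (m : X ≃ₗ[F] X) (((m ^ j : W) : X ≃ₗ[F] X) u) = u
        rw [ih, hu]
    have hsum : B u y = (N : F) * B u x := by
      simp only [y, map_sum]
      rw [Finset.sum_congr rfl (g := fun _ => B u x)]
      · simp
      · intro j _
        calc B u (((m ^ j : W) : X ≃ₗ[F] X) x)
            = B (((m ^ j : W) : X ≃ₗ[F] X) u) (((m ^ j : W) : X ≃ₗ[F] X) x) := by rw [hpu]
          _ = B u x := hinv _ (m ^ j).2 _ _
    rw [hk, map_smul, huu, smul_zero] at hsum
    have hN : ((N : ℕ) : F) ≠ 0 := by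
      intro h
      obtain ⟨k, hk⟩ := orderOf_dvd_natCard m
      apply hp
      rw [hk]; push_cast; rw [h, zero_mul]
    exact (mul_eq_zero.mp hsum.symm).resolve_left hN
  have hcomm : ∀ m ∈ M, ∀ m' ∈ M, ∀ x, (m : X ≃ₗ[F] X) ((m' : X ≃ₗ[F] X) x) =
      (m' : X ≃ₗ[F] X) ((m : X ≃ₗ[F] X) x) := by
    intro m hm m' hm' x
    exact congrArg (fun w : W => (w : X ≃ₗ[F] X) x) (hMab m hm m' hm')
  -- commuting elements act by a sign on axes
  have hsign : ∀ m ∈ M, m ≠ 1 → ∀ u, (m : X ≃ₗ[F] X) u = u →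
      B u u ≠ 0 → (∀ v, (m : X ≃ₗ[F] X) v = v → ∃ k : F, v = k • u) → ∀ m' ∈ M,
      (m' : X ≃ₗ[F] X) u = u ∨ (m' : X ≃ₗ[F] X) u = -u := by
    intro m hm _ u hu huu hline m' hm'
    obtain ⟨k, hk⟩ := hline ((m' : X ≃ₗ[F] X) u) (by rw [hcomm m hm m' hm', hu])
    have h := hinv m' m'.2 u u
    rw [hk] at h
    simp only [map_smul, LinearMap.smul_apply, smul_eq_mul] at h
    have h' : (k - 1) * (k + 1) = 0 := by
      apply mul_right_cancel₀ huu
      linear_combination h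
    rcases mul_eq_zero.mp h' with h | h
    · left; rw [hk, sub_eq_zero.mp h, one_smul]
    · right; rw [hk, eq_neg_of_add_eq_zero_left h, neg_one_smul]
  have hne_neg : ∀ u : X, u ≠ 0 → -u ≠ u := by
    intro u hu h
    apply hu
    have : (2 : F) • u = 0 := by
      rw [two_smul]; nth_rewrite 1 [← h]; simp
    exact (smul_eq_zero.mp this).resolve_left h2
  -- an element of M whose axis is W-invariant gives a contradiction
  obtain ⟨u1, hu10, hu1, hline1, huu1⟩ := haxis m1 hm1M hm1
  by_cases hall : ∀ m ∈ M, (m : X ≃ₗ[F] X) u1 = u1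
  · apply hnoline u1 hu10
    intro w hw
    have hconj : (⟨w, hw⟩ : W) * m1 * (⟨w, hw⟩ : W)⁻¹ ∈ M := hMn.conj_mem m1 hm1M ⟨w, hw⟩
    have hcne : (⟨w, hw⟩ : W) * m1 * (⟨w, hw⟩ : W)⁻¹ ≠ 1 := by
      intro h; exact hm1 (conj_eq_one_iff.mp h)
    obtain ⟨u, hu0, hu, hline, huu⟩ := haxis _ hconj hcne
    obtain ⟨k1, hk1⟩ := hline u1 (hall _ hconj)
    obtain ⟨k2, hk2⟩ := hline (w u1) (by
      change w (((m1 : X ≃ₗ[F] X)) (w⁻¹ (w u1))) = w u1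
      have : w⁻¹ (w u1) = u1 := by simp [← LinearEquiv.mul_apply]
      rw [this, hu1])
    have hk10 : k1 ≠ 0 := by
      rintro rfl; rw [zero_smul] at hk1; exact hu10 hk1
    refine ⟨k2 * k1⁻¹, ?_⟩
    calc w u1 = k2 • u := hk2
      _ = (k2 * k1⁻¹) • (k1 • u) := by
        rw [smul_smul, mul_assoc, inv_mul_cancel₀ hk10, mul_one]
      _ = (k2 * k1⁻¹) • u1 := by rw [← hk1]
  push Not at hall
  obtain ⟨m2, hm2M, hm2u1⟩ := hall
  have hm2 : m2 ≠ 1 := by rintro rfl; exact hm2u1 rfl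
  have h21 : (m2 : X ≃ₗ[F] X) u1 = -u1 :=
    (hsign m1 hm1M hm1 u1 hu1 huu1 hline1 m2 hm2M).resolve_left hm2u1
  obtain ⟨u2, hu20, hu2, hline2, huu2⟩ := haxis m2 hm2M hm2
  have h12o : B u1 u2 = 0 := by
    have h := hinv m2 m2.2 u1 u2
    rw [h21, hu2, map_neg, LinearMap.neg_apply] at h
    have : (2 : F) * B u1 u2 = 0 := by linear_combination -h
    exact (mul_eq_zero.mp this).resolve_left h2
  have hind : LinearIndependent F ![u1, u2] := by
    rw [LinearIndependent.pair_iff' hu10]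
    intro k hk
    apply huu2
    nth_rewrite 1 [← hk]
    rw [map_smul, LinearMap.smul_apply, h12o, smul_zero]
  have h12 : (m1 : X ≃ₗ[F] X) u2 = -u2 := by
    refine (hsign m2 hm2M hm2 u2 hu2 huu2 hline2 m1 hm1M).resolve_left (fun h => ?_)
    exact hm1 (htwo m1 hm1M u1 u2 hu1 h hind)
  have hmulap : ∀ (v w : W) x, ((v * w : W) : X ≃ₗ[F] X) x = (v : X ≃ₗ[F] X) ((w : X ≃ₗ[F] X) x) :=
    fun v w x => rfl
  have hall4 : ∀ m ∈ M, m = 1 ∨ m = m1 ∨ m = m2 ∨ m = m1 * m2 := by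
    have key : ∀ m ∈ M, ∀ m' ∈ M, (m : X ≃ₗ[F] X) ((m' : X ≃ₗ[F] X) u1) = u1 →
        (m : X ≃ₗ[F] X) ((m' : X ≃ₗ[F] X) u2) = u2 → m * m' = 1 := by
      intro m hm m' hm' h1 h2
      exact htwo (m * m') (M.mul_mem hm hm') u1 u2 h1 h2 hind
    have k11 : m1 * m1 = 1 := key m1 hm1M m1 hm1M (by simp [hu1]) (by simp [h12])
    have k22 : m2 * m2 = 1 := key m2 hm2M m2 hm2M (by simp [h21]) (by simp [hu2])
    intro m hm
    rcases hsign m1 hm1M hm1 u1 hu1 huu1 hline1 m hm with e1 | e1 <;>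
      rcases hsign m2 hm2M hm2 u2 hu2 huu2 hline2 m hm with e2 | e2
    · left; exact htwo m hm u1 u2 e1 e2 hind
    · right; left
      have := key m hm m1 hm1M (by rw [hu1, e1]) (by rw [h12, map_neg, e2, neg_neg])
      rw [← mul_left_inj m1, this, k11]
    · right; right; left
      have := key m hm m2 hm2M (by rw [h21, map_neg, e1, neg_neg]) (by rw [hu2, e2])
      rw [← mul_left_inj m2, this, k22]
    · right; right; right
      have := key m hm (m1 * m2) (M.mul_mem hm1M hm2M)
        (by rw [hmulap, h21, map_neg, hu1, map_neg, e1, neg_neg])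
        (by rw [hmulap, hu2, h12, map_neg, e2, neg_neg])
      have k33 : (m1 * m2) * (m1 * m2) = 1 := by
        calc (m1 * m2) * (m1 * m2) = m1 * (m2 * m1) * m2 := by group
          _ = (m1 * m1) * (m2 * m2) := by rw [hMab m2 hm2M m1 hm1M]; group
          _ = 1 := by rw [k11, k22, one_mul]
      rw [← mul_left_inj (m1 * m2), this, k33]
  have h3ne : m1 * m2 ≠ 1 := by
    intro h
    have := congrArg (fun w : W => (w : X ≃ₗ[F] X) u1) h
    simp only [hmulap, h21, map_neg, hu1] at this
    exact hne_neg u1 hu10 this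
  have hd12 : m1 ≠ m2 := by
    rintro rfl
    rw [hu1] at h21; exact hne_neg u1 hu10 h21.symm
  have hd13 : m1 ≠ m1 * m2 := by
    intro h; exact hm2 (left_eq_mul.mp h)
  have hd23 : m2 ≠ m1 * m2 := by
    intro h; exact hm1 (right_eq_mul.mp h)
  have hm3M : m1 * m2 ∈ M := M.mul_mem hm1M hm2M
  have hmem : ∀ x : W, (x = m1 ∨ x = m2 ∨ x = m1 * m2) → x ∈ M ∧ x ≠ 1 := by
    rintro x (rfl | rfl | rfl)
    · exact ⟨hm1M, hm1⟩
    · exact ⟨hm2M, hm2⟩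
    · exact ⟨hm3M, h3ne⟩
  obtain ⟨m, hm, hfix⟩ := exists_fixed_of_three
    ((MulAut.toPerm W).comp (MulAut.conj : W →* MulAut W)) h3 m1 m2 (m1 * m2) hd12 hd13 hd23 (by
      intro w x hx
      obtain ⟨hxM, hx1⟩ := hmem x hx
      have hc : w * x * w⁻¹ ∈ M := hMn.conj_mem x hxM w
      have hc1 : w * x * w⁻¹ ≠ 1 := fun h => hx1 (conj_eq_one_iff.mp h)
      have := (hall4 _ hc).resolve_left hc1
      exact this)
  obtain ⟨hmM, hmne⟩ := hmem m hm
  obtain ⟨u, hu0, hu, hline, huu⟩ := haxis m hmM hmne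
  apply hnoline u hu0
  intro w hw
  apply hline
  have h := hfix ⟨w, hw⟩
  have h' : (⟨w, hw⟩ : W) * m * (⟨w, hw⟩ : W)⁻¹ = m := h
  have h'' : (⟨w, hw⟩ : W) * m = m * (⟨w, hw⟩ : W) := mul_inv_eq_iff_eq_mul.mp h'
  have := congrArg (fun w : W => (w : X ≃ₗ[F] X) u) h''
  simp only [hmulap, hu] at this
  exact this.symm

end KeyThreeMain
section Triple

/-- The reflection as a linear equivalence. -/
noncomputable def reflEquiv {F X : Type*} [Field F] [AddCommGroup X] [Module F X]
    (B : LinearMap.BilinForm F X) (a : X) (ha : B a a ≠ 0) : X ≃ₗ[F] X :=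
  LinearEquiv.ofInvolutive
    { toFun := fun x => x - (2 * B a x / B a a) • a
      map_add' := by
        intro x y
        rw [map_add, mul_add, add_div, add_smul]; abel
      map_smul' := by
        intro k x
        simp only [map_smul, smul_eq_mul, RingHom.id_apply, smul_sub, smul_smul]
        congr 2; ring }
    (by
      intro x
      change (x - (2 * B a x / B a a) • a) -
        (2 * B a (x - (2 * B a x / B a a) • a) / B a a) • a = x
      rw [map_sub, map_smul, smul_eq_mul, sub_sub, ← add_smul]
      have : 2 * B a x / B a a + 2 * (B a x - 2 * B a x / B a a * B a a) / B a a = 0 := by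
        field_simp; ring
      rw [this, zero_smul, sub_zero])

lemma reflEquiv_apply {F X : Type*} [Field F] [AddCommGroup X] [Module F X]
    (B : LinearMap.BilinForm F X) (a : X) (ha : B a a ≠ 0) (x : X) :
    reflEquiv B a ha x = x - (2 * B a x / B a a) • a := rfl

variable {F : Type*} [Field F] {n : ℕ}

/-- `v` is a root of `K` with respect to `B`. -/
def IsRoot (K : Subgroup (GL (Fin n) F)) (B : LinearMap.BilinForm F (Fin n → F))
    (v : Fin n → F) : Prop :=
  B v v ≠ 0 ∧ ∃ g ∈ K, ∀ x : Fin n → F,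
    x ᵥ* (g : Matrix (Fin n) (Fin n) F) = x - (2 * B v x / B v v) • v

theorem triple (K : Subgroup (GL (Fin n) F)) [Finite K] [Group.IsSolvable K]
    (h3 : ¬ 3 ∣ Nat.card K) (hp : (Nat.card K : F) ≠ 0)
    (B : LinearMap.BilinForm F (Fin n → F)) (hs : ∀ x y, B x y = B y x) (h2 : (2 : F) ≠ 0)
    (v1 v2 v3 : Fin n → F) (hli : LinearIndependent F ![v1, v2, v3])
    (r1 : IsRoot K B v1) (r2 : IsRoot K B v2) (r3 : IsRoot K B v3)
    (h12 : B v1 v2 ≠ 0) (h23 : B v2 v3 ≠ 0) : False := by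
  classical
  let X := Submodule.span F (Set.range ![v1, v2, v3])
  have hX : Module.finrank F X = 3 := by
    have := finrank_span_eq_card hli
    simpa using this
  let a : X := ⟨v1, Submodule.subset_span ⟨0, rfl⟩⟩
  let b : X := ⟨v2, Submodule.subset_span ⟨1, rfl⟩⟩
  let c : X := ⟨v3, Submodule.subset_span ⟨2, rfl⟩⟩
  let BX : LinearMap.BilinForm F X := B.restrict X
  have hBX : ∀ x y : X, BX x y = B x y := fun x y => rfl
  let ra := reflEquiv BX a r1.1
  let rb := reflEquiv BX b r2.1
  let rc := reflEquiv BX c r3.1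
  let W := Subgroup.closure {ra, rb, rc}
  let D : Subgroup (K × W) :=
    { carrier := {d | ∀ x : X, ((d.2 : X ≃ₗ[F] X) x : Fin n → F) =
        (x : Fin n → F) ᵥ* ((d.1⁻¹ : K) : GL (Fin n) F).1}
      one_mem' := by intro x; simp
      mul_mem' := by
        intro d e hd he x
        change (((d.2 : X ≃ₗ[F] X) ((e.2 : X ≃ₗ[F] X) x) : X) : Fin n → F) = _
        rw [hd, he, vecMul_vecMul]
        simp
      inv_mem' := by
        intro d hd x
        have := hd ((d.2 : X ≃ₗ[F] X)⁻¹ x)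
        have e : (d.2 : X ≃ₗ[F] X) ((d.2 : X ≃ₗ[F] X)⁻¹ x) = x := by
          rw [← LinearEquiv.mul_apply, mul_inv_cancel]; rfl
        rw [e] at this
        change (((d.2 : X ≃ₗ[F] X)⁻¹ x : X) : Fin n → F) = _
        rw [this, vecMul_vecMul, ← Units.val_mul]
        simp }
  have hD : ∀ d : D, ∀ x : X, ((d.1.2 : X ≃ₗ[F] X) x : Fin n → F) =
        (x : Fin n → F) ᵥ* ((d.1.1⁻¹ : K) : GL (Fin n) F).1 := fun d => d.2
  let f1 : D →* K := (MonoidHom.fst K W).comp D.subtype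
  let f2 : D →* W := (MonoidHom.snd K W).comp D.subtype
  have hf1 : Function.Injective f1 := by
    intro d e h
    have h' : d.1.1 = e.1.1 := h
    apply Subtype.ext
    apply Prod.ext h'
    apply Subtype.ext
    apply LinearEquiv.ext
    intro x
    apply Subtype.ext
    rw [hD d, hD e, h']
  have hgen : ∀ φ ∈ W, ∃ g : K, ∀ x : X, ((φ x : X) : Fin n → F) =
        (x : Fin n → F) ᵥ* ((g⁻¹ : K) : GL (Fin n) F).1 := by
    have hroot : ∀ (v : X) (hv : IsRoot K B v.1), ∃ g : K, ∀ x : X,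
        ((reflEquiv BX v hv.1 x : X) : Fin n → F) =
          (x : Fin n → F) ᵥ* ((g⁻¹ : K) : GL (Fin n) F).1 := by
      intro v hv
      obtain ⟨_, g, hg, hgx⟩ := hv
      refine ⟨(⟨g, hg⟩ : K)⁻¹, fun x => ?_⟩
      rw [inv_inv, hgx]
      rfl
    intro φ hφ
    induction hφ using Subgroup.closure_induction with
    | mem φ hφ =>
      rcases hφ with rfl | rfl | rfl
      · exact hroot a r1
      · exact hroot b r2
      · exact hroot c r3
    | one => exact ⟨1, fun x => by simp⟩
    | mul φ ψ _ _ h1 h2 =>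
      obtain ⟨g, hg⟩ := h1
      obtain ⟨h, hh⟩ := h2
      refine ⟨g * h, fun x => ?_⟩
      rw [LinearEquiv.mul_apply, hg, hh, vecMul_vecMul]
      simp
    | inv φ _ h1 =>
      obtain ⟨g, hg⟩ := h1
      refine ⟨g⁻¹, fun x => ?_⟩
      have := hg (φ⁻¹ x)
      have e : φ (φ⁻¹ x) = x := by
        rw [← LinearEquiv.mul_apply, mul_inv_cancel]; rfl
      rw [e] at this
      rw [this, vecMul_vecMul, ← Units.val_mul]
      simp
  have hf2 : Function.Surjective f2 := by
    rintro ⟨φ, hφ⟩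
    obtain ⟨g, hg⟩ := hgen φ hφ
    exact ⟨⟨(g, ⟨φ, hφ⟩), hg⟩, rfl⟩
  have : Finite D := Finite.of_injective f1 hf1
  have : Finite W := Finite.of_surjective f2 hf2
  have : Group.IsSolvable D := Group.isSolvable_of_isSolvable_injective hf1
  have : Group.IsSolvable W := Group.isSolvable_of_surjective hf2
  have hdvd : Nat.card W ∣ Nat.card K :=
    (Subgroup.card_dvd_of_surjective f2 hf2).trans (Subgroup.card_dvd_of_injective f1 hf1)
  refine key3 hX BX (fun x y => hs x y) h2 a b c ?_ r1.1 r2.1 r3.1 h12 h23 ra rb rc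
    (fun x => rfl) (fun x => rfl) (fun x => rfl) W rfl (fun h => h3 (h.trans hdvd)) ?_
  · intro S ha hb hc
    rw [eq_top_iff]
    rintro ⟨x, hx⟩ _
    have hle : X ≤ S.map X.subtype := by
      apply Submodule.span_le.mpr
      rintro _ ⟨i, rfl⟩
      fin_cases i
      · exact ⟨a, ha, rfl⟩
      · exact ⟨b, hb, rfl⟩
      · exact ⟨c, hc, rfl⟩
    obtain ⟨y, hy, hyx⟩ := hle hx
    have : y = ⟨x, hx⟩ := Subtype.ext hyx
    rw [← this]; exact hy
  · intro h
    obtain ⟨k, hk⟩ := hdvd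
    apply hp
    rw [hk]; push_cast; rw [h, zero_mul]

end Triple
section Pres

variable {F : Type*} [Field F] {n : ℕ}

/-- The diagonal bilinear form. -/
def dform (b : Fin n → F) : LinearMap.BilinForm F (Fin n → F) :=
  LinearMap.mk₂ F (fun x y => ∑ i, b i * x i * y i)
    (by intro x y z; rw [← Finset.sum_add_distrib]; congr 1; ext i; simp only [Pi.add_apply]; ring)
    (by intro k x y; rw [smul_eq_mul, Finset.mul_sum]; congr 1; ext i
        simp only [Pi.smul_apply, smul_eq_mul]; ring)
    (by intro x y z; rw [← Finset.sum_add_distrib]; congr 1; ext i; simp only [Pi.add_apply]; ring)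
    (by intro k x y; rw [smul_eq_mul, Finset.mul_sum]; congr 1; ext i
        simp only [Pi.smul_apply, smul_eq_mul]; ring)

lemma dform_apply (b x y : Fin n → F) : dform b x y = ∑ i, b i * x i * y i := rfl

lemma dform_symm (b x y : Fin n → F) : dform b x y = dform b y x := by
  rw [dform_apply, dform_apply]; congr 1; ext i; ring

/-- Basis vectors. -/
def ev (F : Type*) [Field F] {n : ℕ} (i : Fin n) : Fin n → F := Pi.single i 1

lemma ev_same (i : Fin n) : ev F i i = 1 := by simp [ev]

lemma ev_ne {i j : Fin n} (h : j ≠ i) : ev F i j = 0 := by simp [ev, h]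

lemma dform_ev_right (b x : Fin n → F) (i : Fin n) : dform b x (ev F i) = b i * x i := by
  rw [dform_apply, Fintype.sum_eq_single i]
  · rw [ev_same, mul_one]
  · intro j hj; rw [ev_ne hj, mul_zero]

lemma dform_ev_left (b x : Fin n → F) (i : Fin n) : dform b (ev F i) x = b i * x i := by
  rw [dform_symm, dform_ev_right]

lemma ev_vecMul (i : Fin n) (g : Matrix (Fin n) (Fin n) F) : ev F i ᵥ* g = g i := by
  simp [ev]; rfl

lemma exists_of_dform_ne (b x y : Fin n → F) (h : dform b x y ≠ 0) : ∃ i, x i ≠ 0 ∧ y i ≠ 0 := by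
  by_contra hcon
  push Not at hcon
  apply h
  rw [dform_apply]
  apply Finset.sum_eq_zero
  intro i _
  by_cases hx : x i = 0
  · rw [hx]; ring
  · rw [hcon i hx]; ring

/-- Block index. -/
def blk (i : Fin n) : ℕ := i.1 / 2

/-- Good index: its block is inside the first `n - 1` coordinates. -/
def goodIdx (i : Fin n) : Prop := 2 * (i.1 / 2) + 2 < n

lemma blk_of_not_good {i : Fin n} (h : ¬ goodIdx i) : blk i = (n - 1) / 2 := by
  unfold goodIdx at h; unfold blk; have := i.2; omega

lemma good_of_blk {i j : Fin n} (h : goodIdx i) (hb : blk j = blk i) : goodIdx j := by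
  unfold goodIdx at *; unfold blk at hb; omega

lemma exists_partner {i : Fin n} (h : goodIdx i) : ∃ j : Fin n, j ≠ i ∧ blk j = blk i := by
  unfold goodIdx at h
  by_cases hp : i.1 % 2 = 0
  · refine ⟨⟨i.1 + 1, by omega⟩, ?_, ?_⟩
    · intro h; have := congrArg Fin.val h; simp at this
    · unfold blk; simp only; omega
  · refine ⟨⟨i.1 - 1, by omega⟩, ?_, ?_⟩
    · intro h; have := congrArg Fin.val h; simp only at this; omega
    · unfold blk; simp only; omega

lemma eq_of_blk {i j k : Fin n} (hij : j ≠ i) (h : blk j = blk i) (hk : blk k = blk i) :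
    k = i ∨ k = j := by
  have hij' : j.1 ≠ i.1 := fun h => hij (Fin.ext h)
  unfold blk at *
  have : k.1 = i.1 ∨ k.1 = j.1 := by omega
  rcases this with h | h
  · left; exact Fin.ext h
  · right; exact Fin.ext h

/-- The setting for the block preservation argument. -/
structure Setting (K : Subgroup (GL (Fin n) F)) (b : Fin n → F) : Prop where
  b_ne : ∀ i, b i ≠ 0
  noTriple : ∀ v1 v2 v3 : Fin n → F, LinearIndependent F ![v1, v2, v3] →
    IsRoot K (dform b) v1 → IsRoot K (dform b) v2 → IsRoot K (dform b) v3 →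
    dform b v1 v2 ≠ 0 → dform b v2 v3 ≠ 0 → False
  root_ev : ∀ i, IsRoot K (dform b) (ev F i)
  root_sub : ∀ i j : Fin n, goodIdx i → j ≠ i → blk j = blk i →
    IsRoot K (dform b) (ev F i - ev F j)
  sim : ∀ g ∈ K, ∃ c : F, c ≠ 0 ∧ ∀ x y : Fin n → F,
    dform b (x ᵥ* (g : Matrix (Fin n) (Fin n) F)) (y ᵥ* (g : Matrix (Fin n) (Fin n) F)) =
      c * dform b x y

variable {K : Subgroup (GL (Fin n) F)} {b : Fin n → F}

lemma Setting.root_mul (S : Setting K b) {v : Fin n → F} (hv : IsRoot K (dform b) v)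
    {g : GL (Fin n) F} (hg : g ∈ K) :
    IsRoot K (dform b) (v ᵥ* (g : Matrix (Fin n) (Fin n) F)) := by
  obtain ⟨c, hc0, hc⟩ := S.sim g hg
  obtain ⟨hvv, r, hr, hrx⟩ := hv
  refine ⟨by rw [hc]; exact mul_ne_zero hc0 hvv, g⁻¹ * r * g,
    K.mul_mem (K.mul_mem (K.inv_mem hg) hr) hg, fun x => ?_⟩
  have h1 : x = (x ᵥ* ((g⁻¹ : GL (Fin n) F) : Matrix (Fin n) (Fin n) F)) ᵥ*
      (g : Matrix (Fin n) (Fin n) F) := by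
    rw [vecMul_vecMul, ← Units.val_mul, inv_mul_cancel, Units.val_one, vecMul_one]
  set y := x ᵥ* ((g⁻¹ : GL (Fin n) F) : Matrix (Fin n) (Fin n) F) with hy
  rw [Units.val_mul, Units.val_mul, ← vecMul_vecMul, ← vecMul_vecMul, ← hy, hrx, sub_vecMul,
    smul_vecMul, ← h1]
  nth_rewrite 3 [h1]
  rw [hc, hc]
  congr 2
  field_simp

lemma Setting.root_good (S : Setting K b) {v : Fin n → F} (hv : IsRoot K (dform b) v)
    {i : Fin n} (hi : goodIdx i) (hvi : v i ≠ 0) {k : Fin n} (hk : v k ≠ 0) : blk k = blk i := by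
  by_contra hne
  obtain ⟨j, hji, hj⟩ := exists_partner hi
  have hki : k ≠ i := by rintro rfl; exact hne rfl
  have hkj : k ≠ j := by rintro rfl; exact hne hj
  refine S.noTriple v (ev F i) (ev F i - ev F j) ?_ hv (S.root_ev i) (S.root_sub i j hi hji hj)
    ?_ ?_
  · rw [Fintype.linearIndependent_iff]
    intro s hs
    rw [Fin.sum_univ_three] at hs
    simp only [Matrix.cons_val_zero, Matrix.cons_val_one, Matrix.cons_val] at hs
    have hk' := congrFun hs k
    have hi' := congrFun hs i
    have hj' := congrFun hs j
    simp only [Pi.add_apply, Pi.smul_apply, Pi.sub_apply, smul_eq_mul, Pi.zero_apply, ev_same,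
      ev_ne hki, ev_ne hkj, ev_ne hji, ev_ne hji.symm] at hk' hi' hj'
    have h0 : s 0 = 0 := by
      have : s 0 * v k = 0 := by linear_combination hk'
      exact (mul_eq_zero.mp this).resolve_right hk
    rw [h0] at hi' hj'
    have h2 : s 2 = 0 := by linear_combination -hj'
    have h1 : s 1 = 0 := by linear_combination hi' - h2
    intro t
    fin_cases t
    · exact h0
    · exact h1
    · exact h2
  · rw [dform_ev_right]; exact mul_ne_zero (S.b_ne i) hvi
  · rw [dform_ev_left, Pi.sub_apply, ev_same, ev_ne hji.symm, sub_zero, mul_one]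
    exact S.b_ne i

lemma Setting.root_blk (S : Setting K b) {v : Fin n → F} (hv : IsRoot K (dform b) v)
    {i k : Fin n} (hi : v i ≠ 0) (hk : v k ≠ 0) : blk k = blk i := by
  by_cases h : goodIdx i
  · exact S.root_good hv h hi hk
  by_cases h' : goodIdx k
  · exact (S.root_good hv h' hk hi).symm
  rw [blk_of_not_good h, blk_of_not_good h']

lemma Setting.two_roots (S : Setting K b) {v w : Fin n → F} (hv : IsRoot K (dform b) v)
    (hw : IsRoot K (dform b) w) (hvw : dform b v w ≠ 0)
    {i k : Fin n} (hi : v i ≠ 0) (hk : w k ≠ 0) : blk i = blk k := by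
  obtain ⟨m, hm1, hm2⟩ := exists_of_dform_ne b v w hvw
  rw [S.root_blk hv hm1 hi, S.root_blk hw hm2 hk]

lemma Setting.row_blk (S : Setting K b) {g : GL (Fin n) F} (hg : g ∈ K) {i k l : Fin n}
    (hk : (g : Matrix (Fin n) (Fin n) F) i k ≠ 0) (hl : (g : Matrix (Fin n) (Fin n) F) i l ≠ 0) :
    blk k = blk l := by
  have := S.root_mul (S.root_ev i) hg
  rw [ev_vecMul] at this
  exact S.root_blk this hl hk

lemma Setting.good_pair (S : Setting K b) {g : GL (Fin n) F} (hg : g ∈ K) {i j k l : Fin n}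
    (hi : goodIdx i) (hji : j ≠ i) (hj : blk j = blk i)
    (hk : (g : Matrix (Fin n) (Fin n) F) i k ≠ 0) (hl : (g : Matrix (Fin n) (Fin n) F) j l ≠ 0) :
    blk k = blk l := by
  obtain ⟨c, hc0, hc⟩ := S.sim g hg
  have h1 := S.root_mul (S.root_ev i) hg
  have h2 := S.root_mul (S.root_sub i j hi hji hj) hg
  have h3 := hc (ev F i) (ev F i - ev F j)
  rw [dform_ev_left, Pi.sub_apply, ev_same, ev_ne hji.symm, sub_zero, mul_one] at h3
  have h4 := mul_ne_zero hc0 (S.b_ne i)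
  rw [← h3] at h4
  rw [sub_vecMul, ev_vecMul, ev_vecMul] at *
  by_cases hil : (g : Matrix (Fin n) (Fin n) F) i l = 0
  · refine S.two_roots h1 h2 h4 hk ?_
    rw [Pi.sub_apply, hil, zero_sub, neg_ne_zero]
    exact hl
  · exact S.row_blk hg hk hil

theorem Setting.pres (S : Setting K b) {g : GL (Fin n) F} (hg : g ∈ K) {i i' j j' : Fin n}
    (hi : blk i = blk i') (hj : (g : Matrix (Fin n) (Fin n) F) i j ≠ 0)
    (hj' : (g : Matrix (Fin n) (Fin n) F) i' j' ≠ 0) : blk j = blk j' := by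
  by_cases hii : i' = i
  · subst hii; exact S.row_blk hg hj hj'
  by_cases hgood : goodIdx i
  · exact S.good_pair hg hgood hii hi.symm hj hj'
  -- the main step
  have main : ∀ i i' j j' : Fin n, blk i = blk i' → i' ≠ i → goodIdx j →
      (g : Matrix (Fin n) (Fin n) F) i j ≠ 0 → (g : Matrix (Fin n) (Fin n) F) i' j' ≠ 0 →
      blk j = blk j' := by
    clear hi hj hj' hii hgood i i' j j'
    intro i i' j j' hi hii hgood hj hj'
    by_contra hne
    obtain ⟨l, hlj, hl⟩ := exists_partner hgood
    have hg' : g⁻¹ ∈ K := K.inv_mem hg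
    set h : Matrix (Fin n) (Fin n) F := ((g⁻¹ : GL (Fin n) F) : Matrix (Fin n) (Fin n) F) with hh
    set G : Matrix (Fin n) (Fin n) F := (g : Matrix (Fin n) (Fin n) F) with hG
    have hGh : G * h = 1 := g.mul_inv
    have hhG : h * G = 1 := g.inv_mul
    have hrow : ∀ m, G i m ≠ 0 → m = j ∨ m = l :=
      fun m hm => eq_of_blk hlj hl (S.row_blk hg hm hj)
    -- e_i as a combination
    have e1 : G i j * h j i + G i l * h l i = 1 := by
      have := congrFun (congrFun hGh i) i
      rw [Matrix.mul_apply, Fintype.sum_eq_add j l hlj.symm, Matrix.one_apply_eq] at this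
      · exact this
      · rintro x ⟨hx1, hx2⟩
        have : G i x = 0 := by
          by_contra hx; rcases hrow x hx with h | h
          · exact hx1 h
          · exact hx2 h
        rw [this, zero_mul]
    have e2 : h j i ≠ 0 ∨ h l i ≠ 0 := by
      by_contra hcon
      push Not at hcon
      rw [hcon.1, hcon.2] at e1
      simp at e1
    have e3 : ∀ t, (h j t ≠ 0 ∨ h l t ≠ 0) → t = i ∨ t = i' := by
      intro t ht
      apply eq_of_blk hii hi.symm
      have hgl := good_of_blk hgood hl
      rcases e2 with e2 | e2 <;> rcases ht with ht | ht
      · exact S.row_blk hg' ht e2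
      · exact (S.good_pair hg' hgood hlj hl e2 ht).symm
      · exact S.good_pair hg' hgood hlj hl ht e2
      · exact S.row_blk hg' ht e2
    have e4 : ∀ s, (s = j ∨ s = l) → ∀ m, h s i * G i m + h s i' * G i' m =
        (1 : Matrix (Fin n) (Fin n) F) s m := by
      intro s hs m
      have := congrFun (congrFun hhG s) m
      rw [Matrix.mul_apply, Fintype.sum_eq_add i i' (Ne.symm hii)] at this
      · exact this
      · rintro x ⟨hx1, hx2⟩
        have : h s x = 0 := by
          by_contra hx
          have : x = i ∨ x = i' := by
            apply e3
            rcases hs with rfl | rfl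
            · exact Or.inl hx
            · exact Or.inr hx
          tauto
        rw [this, zero_mul]
    have hj'j : j' ≠ j := by rintro rfl; exact hne rfl
    have hj'l : j' ≠ l := by rintro rfl; exact hne hl.symm
    have e5 : G i j' = 0 := by
      by_contra hcon
      rcases hrow j' hcon with h | h
      · exact hj'j h
      · exact hj'l h
    have e6 : h j i' = 0 := by
      have := e4 j (Or.inl rfl) j'
      rw [e5, Matrix.one_apply_ne hj'j.symm, mul_zero, zero_add] at this
      exact (mul_eq_zero.mp this).resolve_right hj'
    have e7 : h l i' = 0 := by
      have := e4 l (Or.inr rfl) j'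
      rw [e5, Matrix.one_apply_ne hj'l.symm, mul_zero, zero_add] at this
      exact (mul_eq_zero.mp this).resolve_right hj'
    have f1 := e4 j (Or.inl rfl) j
    have f2 := e4 j (Or.inl rfl) l
    have f3 := e4 l (Or.inr rfl) l
    rw [e6, Matrix.one_apply_eq, zero_mul, add_zero] at f1
    rw [e6, Matrix.one_apply_ne hlj.symm, zero_mul, add_zero] at f2
    rw [e7, Matrix.one_apply_eq, zero_mul, add_zero] at f3
    rcases mul_eq_zero.mp f2 with h0 | h0
    · rw [h0, zero_mul] at f1; exact zero_ne_one f1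
    · rw [h0, mul_zero] at f3; exact zero_ne_one f3
  by_cases hgj : goodIdx j
  · exact main i i' j j' hi hii hgj hj hj'
  by_cases hgj' : goodIdx j'
  · exact (main i' i j' j hi.symm (Ne.symm hii) hgj' hj' hj).symm
  rw [blk_of_not_good hgj, blk_of_not_good hgj']

end Pres
section ThmB

variable {F : Type*} [Field F] {n : ℕ}

/-- Preservation of a partition. -/
def PresB (bl : Fin n → ℕ) (G : Matrix (Fin n) (Fin n) F) : Prop :=
  ∀ i i' j j', bl i = bl i' → G i j ≠ 0 → G i' j' ≠ 0 → bl j = bl j'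

/-- The shifted block index. -/
def blk1 (i : Fin n) : ℕ :=
  if i.1 = 0 then (n - 2) / 2 else if i.1 + 1 < n then (i.1 - 1) / 2 else (n - 1) / 2

lemma blk_blk1_inj (hn : 7 ≤ n) {i j : Fin n} (h : blk i = blk j) (h1 : blk1 i = blk1 j) :
    i = j := by
  apply Fin.ext
  have hi := i.2
  have hj := j.2
  unfold blk at h
  unfold blk1 at h1
  split_ifs at h1 <;> omega

lemma blk1_step {i j : Fin n} (h : blk1 i = blk1 j) (hj : j.1 % 2 = 1) (hj' : j.1 + 2 < n)
    (hi : i.1 ≠ 0) (hij : i.1 ≠ j.1) : i.1 = j.1 + 1 := by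
  unfold blk1 at h
  have := i.2
  split_ifs at h <;> omega

lemma blk1_succ {i j : Fin n} (h : i.1 = j.1 + 1) (hj : j.1 % 2 = 1) (hj' : j.1 + 2 < n) :
    blk1 i = blk1 j := by
  unfold blk1
  split_ifs <;> omega

/-- Indicator vector. -/
def ind (S : Finset (Fin n)) (i : Fin n) : F := if i ∈ S then 1 else 0

/-- The transvection-like matrix `1 - α wᵗ`. -/
def reflM (α : Fin n → F) (S : Finset (Fin n)) : Matrix (Fin n) (Fin n) F :=
  1 - vecMulVec α (ind S)

lemma reflM_conj (α : Fin n → F) (S : Finset (Fin n)) (G : Matrix (Fin n) (Fin n) F)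
    (i j : Fin n) :
    (reflM α S * G * reflM α S) i j = G i j - α i * (ind S ᵥ* G) j - (G *ᵥ α) i * ind S j
      + α i * (ind S ⬝ᵥ (G *ᵥ α)) * ind S j := by
  have h1 : reflM α S * G * reflM α S = G - vecMulVec α (ind S) * G - G * vecMulVec α (ind S)
      + vecMulVec α (ind S) * (G * vecMulVec α (ind S)) := by
    unfold reflM; noncomm_ring
  rw [h1, Matrix.mul_vecMulVec, Matrix.vecMulVec_mul, Matrix.vecMulVec_mul_vecMulVec]
  simp only [Matrix.add_apply, Matrix.sub_apply, vecMulVec_apply, Matrix.smul_apply, Pi.smul_apply,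
    smul_eq_mul]
  try ring

/-- Lemma C. -/
lemma lemmaC (G : Matrix (Fin n) (Fin n) F) (σ : Fin n → Fin n)
    (hσ : ∀ i j, G i j ≠ 0 ↔ j = σ i) (α : Fin n → F) (S : Finset (Fin n))
    (hα0 : ∀ i, i ∉ S → α i = 0) (hα1 : ∀ i ∈ S, α i ≠ 0)
    (hP : PresB blk (reflM α S * G * reflM α S))
    (hw : ∀ k : Fin n, ∃ p ∈ S, ∃ q ∈ S, p ≠ k ∧ q ≠ k ∧ blk p ≠ blk q)
    (i : Fin n) (hi : i ∉ S) : σ i ∉ S := by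
  intro hσi
  obtain ⟨p, hp, q, hq, hpk, hqk, hpq⟩ := hw (σ i)
  have hrow : ∀ p ∈ S, p ≠ σ i → (reflM α S * G * reflM α S) i p ≠ 0 := by
    intro p hp hpk
    have h0 : G i p = 0 := by
      by_contra h; exact hpk ((hσ i p).mp h)
    have h1 : (G *ᵥ α) i = G i (σ i) * α (σ i) := by
      rw [mulVec, dotProduct, Fintype.sum_eq_single (σ i)]
      intro j hj
      have : G i j = 0 := by
        by_contra h; exact hj ((hσ i j).mp h)
      rw [this, zero_mul]
    rw [reflM_conj, hα0 i hi, h0, h1]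
    simp only [ind, hp, if_true, zero_mul, sub_zero, add_zero, mul_one, zero_sub, neg_ne_zero]
    exact mul_ne_zero ((hσ i _).mpr rfl) (hα1 _ hσi)
  exact hpq (hP i i p q rfl (hrow p hp hpk) (hrow q hq hqk))

/-- Lemma D. -/
lemma lemmaD (h2 : (2 : F) ≠ 0) (l : Fin n → F) (hl : ∀ i, l i ≠ 0) (α : Fin n → F)
    (S : Finset (Fin n))
    (hα0 : ∀ i, i ∉ S → α i = 0) (hα1 : ∀ i ∈ S, α i ≠ 0)
    (hP : PresB blk (reflM α S * diagonal l * reflM α S))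
    (p q r : Fin n) (hp : p ∈ S) (hq : q ∈ S) (hr : r ∈ S)
    (hpq : blk p ≠ blk q) (hpr : blk p ≠ blk r) (hqr : blk q ≠ blk r)
    (hp' : ∃ i, i ≠ p ∧ blk i = blk p) (hq' : ∃ i, i ≠ q ∧ blk i = blk q)
    (hr' : ∃ i, i ≠ r ∧ blk i = blk r) :
    ∃ μ, ∀ i ∈ S, l i = μ := by
  set M := reflM α S * diagonal l * reflM α S with hM
  obtain ⟨T, hT⟩ : ∃ T, T = ind S ⬝ᵥ (diagonal l *ᵥ α) := ⟨_, rfl⟩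
  have hMe : ∀ i j, M i j = (if i = j then l i else 0) - α i * (ind S j * l j)
      - l i * α i * ind S j + α i * T * ind S j := by
    intro i j
    rw [hM, reflM_conj, ← hT, vecMul_diagonal, mulVec_diagonal, diagonal_apply]
  have hin : ∀ i ∈ S, (ind S i : F) = 1 := fun i hi => by simp [ind, hi]
  have hout : ∀ i, i ∉ S → (ind S i : F) = 0 := fun i hi => by simp [ind, hi]
  have hMS : ∀ i j, i ∈ S → j ∈ S → i ≠ j → M i j = 0 → l i + l j = T := by
    intro i j hi hj hij h
    rw [hMe, if_neg hij, hin j hj] at h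
    have : α i * (l i + l j - T) = 0 := by linear_combination -h
    have := (mul_eq_zero.mp this).resolve_left (hα1 i hi)
    linear_combination this
  have hD1 : ∀ i i' j, i ∈ S → i' ≠ i → blk i' = blk i → M i j ≠ 0 → blk j = blk i := by
    intro i i' j hi hii hb hj
    by_cases hi' : i' ∈ S
    · by_contra hne
      have z1 : M i i = 0 := by
        by_contra h; exact hne (hP i i j i rfl hj h)
      have z2 : M i i' = 0 := by
        by_contra h; exact hne ((hP i i j i' rfl hj h).trans hb)
      have hk : ∃ k ∈ S, blk k ≠ blk i ∧ blk k ≠ blk j := by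
        by_cases c1 : blk p ≠ blk i ∧ blk p ≠ blk j
        · exact ⟨p, hp, c1⟩
        by_cases c2 : blk q ≠ blk i ∧ blk q ≠ blk j
        · exact ⟨q, hq, c2⟩
        refine ⟨r, hr, ?_⟩
        omega
      obtain ⟨k, hk, hki, hkj⟩ := hk
      have hik : i ≠ k := by rintro rfl; exact hki rfl
      have hik' : i' ≠ k := by rintro rfl; exact hki hb
      have z3 : M i k = 0 := by
        by_contra h; exact hkj (hP i i j k rfl hj h).symm
      have z4 : M i' k = 0 := by
        by_contra h; exact hkj (hP i i' j k hb.symm hj h).symm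
      have y2 := hMS i i' hi hi' hii.symm z2
      have y3 := hMS i k hi hk hik z3
      have y4 := hMS i' k hi' hk hik' z4
      rw [hMe, if_pos rfl, hin i hi] at z1
      apply hl i
      have : l i = l i' := by linear_combination y3 - y4
      linear_combination z1 + α i * y2 + α i * this
    · have z : M i' i' = l i' := by
        rw [hMe, hα0 i' hi', if_pos rfl]; ring
      rw [← hb]
      exact hP i i' j i' hb.symm hj (by rw [z]; exact hl i')
  have hsum : ∀ i ∈ S, (∃ i', i' ≠ i ∧ blk i' = blk i) → ∀ j ∈ S, blk j ≠ blk i →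
      l i + l j = T := by
    intro i hi ⟨i', hii, hb⟩ j hj hne
    apply hMS i j hi hj (by rintro rfl; exact hne rfl)
    by_contra h
    exact hne (hD1 i i' j hi hii hb h)
  have s1 := hsum p hp hp' q hq hpq.symm
  have s2 := hsum p hp hp' r hr hpr.symm
  have s3 := hsum q hq hq' r hr hqr.symm
  refine ⟨l p, fun i hi => ?_⟩
  by_cases c : blk i = blk p
  · have s4 := hsum q hq hq' i hi (by rw [c]; exact hpq)
    linear_combination s4 - s1
  · have s4 := hsum p hp hp' i hi c
    linear_combination s4 - s1 + s3 - s2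

theorem thmB (hn : 7 ≤ n) (h2 : (2 : F) ≠ 0) (g : GL (Fin n) F)
    (hP : PresB blk (g : Matrix (Fin n) (Fin n) F))
    (hP1 : PresB blk1 (g : Matrix (Fin n) (Fin n) F))
    (α₁ α₂ : Fin n → F) (S₁ S₂ : Finset (Fin n))
    (hα₁0 : ∀ i, i ∉ S₁ → α₁ i = 0) (hα₁1 : ∀ i ∈ S₁, α₁ i ≠ 0)
    (hα₂0 : ∀ i, i ∉ S₂ → α₂ i = 0) (hα₂1 : ∀ i ∈ S₂, α₂ i ≠ 0)
    (hS₁ : (∀ i : Fin n, i ∈ S₁ ↔ i.1 ≠ 0) ∨ (∀ i : Fin n, i ∈ S₁ ↔ i.1 ≠ 0 ∧ i.1 ≠ 2))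
    (hS₂ : ∀ i : Fin n, i.1 ≠ 1 → i.1 ≠ 3 → i ∈ S₂)
    (hR₁ : PresB blk (reflM α₁ S₁ * (g : Matrix (Fin n) (Fin n) F) * reflM α₁ S₁))
    (hR₂ : PresB blk (reflM α₂ S₂ * (g : Matrix (Fin n) (Fin n) F) * reflM α₂ S₂)) :
    ∃ c : F, (g : Matrix (Fin n) (Fin n) F) = c • (1 : Matrix (Fin n) (Fin n) F) := by
  classical
  set G : Matrix (Fin n) (Fin n) F := (g : Matrix (Fin n) (Fin n) F) with hG
  set h : Matrix (Fin n) (Fin n) F := ((g⁻¹ : GL (Fin n) F) : Matrix (Fin n) (Fin n) F) with hh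
  have hGh : G * h = 1 := g.mul_inv
  have hhG : h * G = 1 := g.inv_mul
  have hrow : ∀ i, ∃ j, G i j ≠ 0 := by
    intro i
    by_contra hcon
    push Not at hcon
    have := congrFun (congrFun hGh i) i
    rw [Matrix.mul_apply, Matrix.one_apply_eq, Finset.sum_eq_zero] at this
    · exact zero_ne_one this
    · intro j _; rw [hcon j, zero_mul]
  have hcol : ∀ j, ∃ i, G i j ≠ 0 := by
    intro j
    by_contra hcon
    push Not at hcon
    have := congrFun (congrFun hhG j) j
    rw [Matrix.mul_apply, Matrix.one_apply_eq, Finset.sum_eq_zero] at this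
    · exact zero_ne_one this
    · intro i _; rw [hcon i, mul_zero]
  choose σ hσ' using hrow
  have hσ : ∀ i j, G i j ≠ 0 ↔ j = σ i := by
    intro i j
    constructor
    · intro hj
      exact blk_blk1_inj hn (hP i i _ _ rfl hj (hσ' i)) (hP1 i i _ _ rfl hj (hσ' i))
    · rintro rfl; exact hσ' i
  have hsurj : Function.Surjective σ := by
    intro j
    obtain ⟨i, hi⟩ := hcol j
    exact ⟨i, ((hσ i j).mp hi).symm⟩
  have hinj : Function.Injective σ := Finite.injective_iff_surjective.mpr hsurj
  have hb : ∀ i j, blk i = blk j → blk (σ i) = blk (σ j) :=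
    fun i j hij => hP i j _ _ hij (hσ' i) (hσ' j)
  have hb1 : ∀ i j, blk1 i = blk1 j → blk1 (σ i) = blk1 (σ j) :=
    fun i j hij => hP1 i j _ _ hij (hσ' i) (hσ' j)
  have hS₁in : ∀ i : Fin n, i.1 ≠ 0 → i.1 ≠ 2 → i ∈ S₁ := by
    intro i h0 h2
    rcases hS₁ with hS | hS
    · exact (hS i).mpr h0
    · exact (hS i).mpr ⟨h0, h2⟩
  let e : (k : ℕ) → k < 7 → Fin n := fun k hk => ⟨k, by omega⟩
  have hC : ∀ i, i ∉ S₁ → σ i ∉ S₁ := by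
    refine lemmaC G σ hσ α₁ S₁ hα₁0 hα₁1 hR₁ ?_
    intro k
    have m1 : e 1 (by omega) ∈ S₁ := hS₁in _ (by simp [e]) (by simp [e])
    have m3 : e 3 (by omega) ∈ S₁ := hS₁in _ (by simp [e]) (by simp [e])
    have m4 : e 4 (by omega) ∈ S₁ := hS₁in _ (by simp [e]) (by simp [e])
    by_cases k1 : e 1 (by omega) = k
    · refine ⟨_, m3, _, m4, ?_, ?_, ?_⟩
      · rw [← k1]; simp [e]
      · rw [← k1]; simp [e]
      · simp [blk, e]
    by_cases k3 : e 3 (by omega) = k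
    · refine ⟨_, m1, _, m4, ?_, ?_, ?_⟩
      · rw [← k3]; simp [e]
      · rw [← k3]; simp [e]
      · simp [blk, e]
    exact ⟨_, m1, _, m3, k1, k3, by simp [blk, e]⟩
  let z : Fin n := ⟨0, by omega⟩
  have hσ0 : σ z = z := by
    rcases hS₁ with hS | hS
    · have := hC z (by rw [hS]; simp [z])
      rw [hS] at this
      apply Fin.ext
      simpa [z] using this
    · have h0 := hC z (by rw [hS]; simp [z])
      have h2' := hC (e 2 (by omega)) (by rw [hS]; simp [e])
      rw [hS] at h0 h2'
      by_contra hne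
      have hne' : (σ z).1 ≠ 0 := fun h => hne (Fin.ext h)
      have a0 : (σ z).1 = 2 := by omega
      have a2 : (σ (e 2 (by omega))).1 = 0 := by
        have : (σ (e 2 (by omega))).1 ≠ 2 := by
          intro h
          have := hinj (Fin.ext (h.trans a0.symm))
          simp [e, z] at this
        omega
      have a1 : (σ (e 1 (by omega))).1 = 3 := by
        have q1 := hb (e 1 (by omega)) z (by simp [blk, e, z])
        have q2 : (σ (e 1 (by omega))).1 ≠ 2 := by
          intro h
          have := hinj (Fin.ext (h.trans a0.symm))
          simp [e, z] at this
        unfold blk at q1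
        omega
      have q := hb1 (e 1 (by omega)) (e 2 (by omega)) (by simp only [blk1, e]; split_ifs <;> omega)
      unfold blk1 at q
      rw [a1, a2] at q
      simp only [if_true] at q
      split_ifs at q <;> omega
  have hσi : ∀ k : ℕ, ∀ hk : k + 1 < n, σ ⟨k, by omega⟩ = ⟨k, by omega⟩ := by
    intro k
    induction k with
    | zero => intro _; exact hσ0
    | succ k ih =>
      intro hk
      have ih' := ih (by omega)
      have hne : σ ⟨k + 1, by omega⟩ ≠ ⟨k, by omega⟩ := by
        intro h
        have := hinj (h.trans ih'.symm)
        simp at this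
      have hne' : (σ ⟨k + 1, by omega⟩).1 ≠ k := fun h => hne (Fin.ext h)
      by_cases hpar : k % 2 = 0
      · have q := hb ⟨k + 1, by omega⟩ ⟨k, by omega⟩ (by simp only [blk]; omega)
        rw [ih'] at q
        unfold blk at q
        apply Fin.ext
        simp only at q ⊢
        omega
      · have q := hb1 ⟨k + 1, by omega⟩ ⟨k, by omega⟩
          (blk1_succ rfl (by simp only; omega) (by simp only; omega))
        rw [ih'] at q
        have hlt := (σ ⟨k + 1, by omega⟩).2
        -- exclude the values already taken
        have h0 : (σ ⟨k + 1, by omega⟩).1 ≠ 0 := by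
          intro h
          have := hinj ((Fin.ext h : σ ⟨k + 1, by omega⟩ = z).trans hσ0.symm)
          simp [z] at this
        apply Fin.ext
        exact blk1_step q (by simp only; omega) (by simp only; omega) h0 hne'
  have hσall : ∀ i, σ i = i := by
    intro i
    by_cases hi : i.1 + 1 < n
    · exact hσi i.1 hi
    · have hne : ¬ (σ i).1 + 1 < n := by
        intro h
        have h1 := hσi (σ i).1 h
        have h2 : σ i = i := hinj h1
        rw [h2] at h
        exact hi h
      apply Fin.ext
      have := (σ i).2
      have := i.2
      omega
  have hdiag : G = diagonal (fun i => G i i) := by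
    ext i j
    rw [diagonal_apply]
    by_cases hij : i = j
    · rw [if_pos hij, hij]
    · rw [if_neg hij]
      by_contra hne
      have := (hσ i j).mp hne
      rw [hσall] at this
      exact hij this.symm
  have hlne : ∀ i, G i i ≠ 0 := fun i => (hσ i i).mpr (hσall i).symm
  rw [hdiag] at hR₁ hR₂
  have hpart : ∀ k (hk : k < 6), ∃ i : Fin n, i ≠ e k (by omega) ∧ blk i = blk (e k (by omega)) := by
    intro k hk
    apply exists_partner
    simp only [goodIdx, e]; omega
  obtain ⟨μ₁, hμ₁⟩ := lemmaD h2 (fun i => G i i) hlne α₁ S₁ hα₁0 hα₁1 hR₁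
    (e 1 (by omega)) (e 3 (by omega)) (e 4 (by omega))
    (hS₁in _ (by simp [e]) (by simp [e])) (hS₁in _ (by simp [e]) (by simp [e]))
    (hS₁in _ (by simp [e]) (by simp [e])) (by simp [blk, e]) (by simp [blk, e]) (by simp [blk, e])
    (hpart 1 (by omega)) (hpart 3 (by omega)) (hpart 4 (by omega))
  obtain ⟨μ₂, hμ₂⟩ := lemmaD h2 (fun i => G i i) hlne α₂ S₂ hα₂0 hα₂1 hR₂
    (e 0 (by omega)) (e 2 (by omega)) (e 4 (by omega))
    (hS₂ _ (by simp [e]) (by simp [e])) (hS₂ _ (by simp [e]) (by simp [e]))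
    (hS₂ _ (by simp [e]) (by simp [e])) (by simp [blk, e]) (by simp [blk, e]) (by simp [blk, e])
    (hpart 0 (by omega)) (hpart 2 (by omega)) (hpart 4 (by omega))
  have hμ : μ₁ = μ₂ := by
    rw [← hμ₁ (e 4 (by omega)) (hS₁in _ (by simp [e]) (by simp [e])),
      ← hμ₂ (e 4 (by omega)) (hS₂ _ (by simp [e]) (by simp [e]))]
  refine ⟨μ₁, ?_⟩
  rw [hdiag, ← diagonal_one, ← diagonal_smul]
  congr 1
  ext i
  simp only [Pi.smul_apply, smul_eq_mul, mul_one]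
  by_cases hi : i.1 ≠ 0 ∧ i.1 ≠ 2
  · exact hμ₁ i (hS₁in i hi.1 hi.2)
  · rw [hμ]
    exact hμ₂ i (hS₂ i (by omega) (by omega))

end ThmB
section Diagonalize

variable {F : Type*} [Field F] {n : ℕ}

lemma exists_GL (φ : (Fin n → F) ≃ₗ[F] (Fin n → F)) :
    ∃ T : GL (Fin n) F, (∀ x, x ᵥ* (T : Matrix (Fin n) (Fin n) F) = φ x) ∧
      ∀ x, x ᵥ* ((T⁻¹ : GL (Fin n) F) : Matrix (Fin n) (Fin n) F) = φ.symm x := by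
  have h1 : ∀ ψ : (Fin n → F) →ₗ[F] (Fin n → F), ∀ x, x ᵥ* (LinearMap.toMatrix' ψ)ᵀ = ψ x := by
    intro ψ x
    rw [vecMul_transpose, LinearMap.toMatrix'_mulVec]
  let T : GL (Fin n) F :=
    { val := (LinearMap.toMatrix' (φ : (Fin n → F) →ₗ[F] (Fin n → F)))ᵀ
      inv := (LinearMap.toMatrix' (φ.symm : (Fin n → F) →ₗ[F] (Fin n → F)))ᵀ
      val_inv := by
        rw [← transpose_mul, ← LinearMap.toMatrix'_comp]
        simp
      inv_val := by
        rw [← transpose_mul, ← LinearMap.toMatrix'_comp]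
        simp }
  exact ⟨T, fun x => h1 _ x, fun x => h1 _ x⟩

lemma exists_alpha_beta [Fintype F] (hodd : Fintype.card F % 2 = 1) (s t : F) (hs : s ≠ 0)
    (ht : t ≠ 0) : ∃ α β : F, s * α ^ 2 + t * β ^ 2 = 1 := by
  open Polynomial in
  obtain ⟨α, β, h⟩ := FiniteField.exists_root_sum_quadratic (R := F)
    (f := C s * X ^ 2 + C 0 * X + C (-1)) (g := C t * X ^ 2 + C 0 * X + C 0)
    (Polynomial.degree_quadratic hs) (Polynomial.degree_quadratic ht) hodd
  refine ⟨α, β, ?_⟩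
  simp at h
  linear_combination h

lemma diag_step [Fintype F] (hodd : Fintype.card F % 2 = 1)
    (Q : (Fin n → F) → F) (φ : (Fin n → F) →ₗ[F] (Fin n → F)) (b : Fin n → F)
    (hb : ∀ i, b i ≠ 0) (hQ : ∀ x, Q (φ x) = ∑ i, b i * x i * x i) (i l : Fin n) (hil : i ≠ l) :
    ∃ (φ' : (Fin n → F) →ₗ[F] (Fin n → F)) (b' : Fin n → F), (∀ i, b' i ≠ 0) ∧
      (∀ x, Q (φ' x) = ∑ i, b' i * x i * x i) ∧ b' i = 1 ∧ ∀ k, k ≠ i → k ≠ l → b' k = b k := by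
  obtain ⟨α, β, h⟩ := exists_alpha_beta hodd (b i) (b l) (hb i) (hb l)
  let ψ : (Fin n → F) →ₗ[F] (Fin n → F) := LinearMap.pi (fun k =>
    if k = i then α • LinearMap.proj i - (b l * β) • LinearMap.proj l
    else if k = l then β • LinearMap.proj i + (b i * α) • LinearMap.proj l
    else LinearMap.proj k)
  have hψi : ∀ x, ψ x i = α * x i - b l * β * x l := by
    intro x; simp [ψ]
  have hψl : ∀ x, ψ x l = β * x i + b i * α * x l := by
    intro x; simp [ψ, hil.symm]
  have hψk : ∀ x k, k ≠ i → k ≠ l → ψ x k = x k := by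
    intro x k h1 h2; simp [ψ, h1, h2]
  let b' : Fin n → F := fun k => if k = i then 1 else if k = l then b i * b l else b k
  have hb'i : b' i = 1 := by simp [b']
  have hb'l : b' l = b i * b l := by simp [b', hil.symm]
  have hb'k : ∀ k, k ≠ i → k ≠ l → b' k = b k := by
    intro k h1 h2; simp [b', h1, h2]
  refine ⟨φ ∘ₗ ψ, b', ?_, ?_, hb'i, hb'k⟩
  · intro k
    by_cases h1 : k = i
    · rw [h1, hb'i]; exact one_ne_zero
    by_cases h2 : k = l
    · rw [h2, hb'l]; exact mul_ne_zero (hb i) (hb l)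
    rw [hb'k k h1 h2]; exact hb k
  · intro x
    rw [LinearMap.comp_apply, hQ]
    have hl : l ∈ Finset.univ.erase i := by simp [hil.symm]
    rw [← Finset.add_sum_erase _ _ (Finset.mem_univ i), ← Finset.add_sum_erase _ _ hl,
      ← Finset.add_sum_erase Finset.univ (fun k => b' k * x k * x k) (Finset.mem_univ i),
      ← Finset.add_sum_erase _ (fun k => b' k * x k * x k) hl]
    have hrest : ∑ k ∈ (Finset.univ.erase i).erase l, b k * ψ x k * ψ x k =
        ∑ k ∈ (Finset.univ.erase i).erase l, b' k * x k * x k := by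
      apply Finset.sum_congr rfl
      intro k hk
      simp only [Finset.mem_erase, Finset.mem_univ, and_true] at hk
      rw [hψk x k hk.2 hk.1, hb'k k hk.2 hk.1]
    rw [hrest, hψi, hψl, hb'i, hb'l]
    linear_combination (x i * x i + b i * b l * x l * x l) * h

lemma diag_form [Fintype F] (hodd : Fintype.card F % 2 = 1) (h2 : (2 : F) ≠ 0) (hn : 1 ≤ n)
    (Q : QuadraticForm F (Fin n → F))
    (hnd : ∀ v : Fin n → F, (∀ w : Fin n → F, QuadraticMap.polar (⇑Q) v w = 0) → v = 0) :
    ∃ (T : GL (Fin n) F) (b : Fin n → F), (∀ i, b i ≠ 0) ∧ (∀ i : Fin n, i.1 + 1 < n → b i = 1) ∧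
      ∀ x, Q (x ᵥ* (T : Matrix (Fin n) (Fin n) F)) = dform b x x := by
  classical
  have : Invertible (2 : F) := invertibleOfNonzero h2
  have h0 : ∃ (φ : (Fin n → F) →ₗ[F] (Fin n → F)) (b : Fin n → F), (∀ i, b i ≠ 0) ∧
      ∀ x, Q (φ x) = ∑ i, b i * x i * x i := by
    have hsep : (QuadraticMap.associated (R := F) Q).SeparatingLeft := by
      intro v hv
      apply hnd
      intro w
      have := hv w
      have h := LinearMap.congr_fun (LinearMap.congr_fun
        (QuadraticMap.two_nsmul_associated F Q) v) w
      rw [LinearMap.smul_apply, LinearMap.smul_apply, this, smul_zero] at h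
      exact h.symm
    obtain ⟨w, ⟨e⟩⟩ := QuadraticForm.equivalent_weightedSumSquares_units_of_nondegenerate' Q hsep
    have hfin : Module.finrank F (Fin n → F) = n := by simp
    generalize Module.finrank F (Fin n → F) = m at w e hfin
    subst hfin
    refine ⟨e.symm.toLinearEquiv.toLinearMap, fun i => (w i : F), fun i => (w i).ne_zero, ?_⟩
    intro x
    have := e.symm.map_app x
    rw [QuadraticMap.weightedSumSquares_apply] at this
    refine Eq.trans this (Finset.sum_congr rfl fun i _ => ?_)
    rw [Units.smul_def, smul_eq_mul, mul_assoc]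
  let l : Fin n := ⟨n - 1, by omega⟩
  have h1 : ∀ s : Finset (Fin n), l ∉ s → ∃ (φ : (Fin n → F) →ₗ[F] (Fin n → F)) (b : Fin n → F),
      (∀ i, b i ≠ 0) ∧ (∀ x, Q (φ x) = ∑ i, b i * x i * x i) ∧ ∀ i ∈ s, b i = 1 := by
    intro s
    induction s using Finset.induction_on with
    | empty =>
      intro _
      obtain ⟨φ, b, hb, hQ⟩ := h0
      exact ⟨φ, b, hb, hQ, by simp⟩
    | insert i s his ih =>
      intro hl
      rw [Finset.mem_insert, not_or] at hl
      obtain ⟨φ, b, hb, hQ, hs⟩ := ih hl.2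
      obtain ⟨φ', b', hb', hQ', hi, hk⟩ := diag_step hodd Q φ b hb hQ i l (Ne.symm hl.1)
      refine ⟨φ', b', hb', hQ', fun k hks => ?_⟩
      rcases Finset.mem_insert.mp hks with rfl | hks'
      · exact hi
      · rw [hk k (by rintro rfl; exact his hks') (by rintro rfl; exact hl.2 hks'), hs k hks']
  obtain ⟨φ, b, hb, hQ, hs⟩ := h1 (Finset.univ.erase l) (by simp)
  have hinj : Function.Injective φ := by
    rw [injective_iff_map_eq_zero]
    intro x hx
    have hp : ∀ y, Q (φ (x + y)) = Q (φ y) := by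
      intro y; rw [map_add, hx, zero_add]
    have hq : Q (φ x) = 0 := by rw [hx, QuadraticMap.map_zero]
    ext i
    have e1 : dform b (x + ev F i) (x + ev F i) = dform b (ev F i) (ev F i) := by
      rw [dform_apply, dform_apply, ← hQ, ← hQ, hp]
    have e2 : dform b x x = 0 := by rw [dform_apply, ← hQ, hq]
    rw [map_add, map_add, LinearMap.add_apply, LinearMap.add_apply, e2,
      dform_ev_left b x, dform_ev_right b x] at e1
    have : 2 * (b i * x i) = 0 := by linear_combination e1
    simpa [h2, hb i] using this
  obtain ⟨T, hT, _⟩ := exists_GL (LinearEquiv.ofInjectiveEndo φ hinj)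
  refine ⟨T, b, hb, fun i hi => hs i ?_, fun x => ?_⟩
  · rw [Finset.mem_erase]
    refine ⟨?_, Finset.mem_univ _⟩
    intro h
    have := congrArg Fin.val h
    simp only [l] at this
    omega
  · rw [hT, dform_apply]
    exact hQ x

end Diagonalize
section PZero

variable {F : Type*} [Field F] {n : ℕ}

lemma entry_eq (g : Matrix (Fin n) (Fin n) F) (i j : Fin n) : g i j = (ev F i ᵥ* g) j := by
  rw [ev_vecMul]

/-- Isometry of the diagonal form. -/
def IsIso (b : Fin n → F) (g : GL (Fin n) F) : Prop :=
  ∀ x : Fin n → F, dform b (x ᵥ* (g : Matrix (Fin n) (Fin n) F))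
    (x ᵥ* (g : Matrix (Fin n) (Fin n) F)) = dform b x x

/-- Permutations stabilizing all blocks. -/
def BlkPerm (σ : Equiv.Perm (Fin n)) : Prop :=
  ∀ i, blk (σ i) = blk i ∧ (σ i ≠ i → goodIdx i)

lemma BlkPerm.sq {σ : Equiv.Perm (Fin n)} (h : BlkPerm σ) (i : Fin n) : σ (σ i) = i := by
  by_cases hi : σ i = i
  · rw [hi, hi]
  · rcases eq_of_blk hi (h i).1 (((h (σ i)).1).trans (h i).1) with h1 | h1
    · exact h1
    · exact absurd (σ.injective h1) hi

/-- `g` is the signed permutation matrix of a block permutation. -/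
def SP (σ : Equiv.Perm (Fin n)) (ε : Fin n → F) (g : GL (Fin n) F) : Prop :=
  BlkPerm σ ∧ (∀ i, ε i * ε i = 1) ∧
    ∀ i, ev F i ᵥ* (g : Matrix (Fin n) (Fin n) F) = ε i • ev F (σ i)

/-- The 2-group of signed block permutations. -/
def PZ (F : Type*) [Field F] (n : ℕ) : Subgroup (GL (Fin n) F) where
  carrier := {g | ∃ (σ : Equiv.Perm (Fin n)) (ε : Fin n → F), SP σ ε g}
  one_mem' := ⟨1, fun _ => 1, fun i => ⟨rfl, fun h => absurd rfl h⟩, fun i => one_mul 1, fun i => by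
    simp⟩
  mul_mem' := by
    rintro g h ⟨σ, ε, hσ, hε, hg⟩ ⟨τ, δ, hτ, hδ, hh⟩
    refine ⟨τ * σ, fun i => ε i * δ (σ i), fun i => ⟨?_, fun hne => ?_⟩, fun i => ?_, fun i => ?_⟩
    · rw [Equiv.Perm.mul_apply, (hτ _).1, (hσ _).1]
    · by_cases h1 : σ i = i
      · rw [Equiv.Perm.mul_apply, h1] at hne
        exact (hτ i).2 hne
      · exact (hσ i).2 h1
    · linear_combination (δ (σ i) * δ (σ i)) * hε i + hδ (σ i)
    · rw [Units.val_mul, ← vecMul_vecMul, hg, smul_vecMul, hh, smul_smul, Equiv.Perm.mul_apply]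
  inv_mem' := by
    rintro g ⟨σ, ε, hσ, hε, hg⟩
    refine ⟨σ, fun i => ε (σ i), hσ, fun i => hε _, fun i => ?_⟩
    have h1 := congrArg (fun v => v ᵥ* ((g⁻¹ : GL (Fin n) F) : Matrix (Fin n) (Fin n) F))
      (hg (σ i))
    simp only [vecMul_vecMul, smul_vecMul, hσ.sq] at h1
    rw [← Units.val_mul, mul_inv_cancel, Units.val_one, vecMul_one] at h1
    rw [h1, smul_smul, hε, one_smul]

lemma GL_ext_ev {g h : GL (Fin n) F} (H : ∀ i, ev F i ᵥ* (g : Matrix (Fin n) (Fin n) F) =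
    ev F i ᵥ* (h : Matrix (Fin n) (Fin n) F)) : g = h := by
  apply Units.ext
  funext i
  have := H i
  rwa [ev_vecMul, ev_vecMul] at this

lemma PZ_isPGroup : IsPGroup 2 (PZ F n) := by
  rintro ⟨g, σ, ε, hσ, hε, hg⟩
  refine ⟨2, ?_⟩
  apply Subtype.ext
  change g ^ (2 ^ 2) = 1
  have h2 : ∀ i, ev F i ᵥ* ((g * g : GL (Fin n) F) : Matrix (Fin n) (Fin n) F) =
      (ε i * ε (σ i)) • ev F i := by
    intro i
    rw [Units.val_mul, ← vecMul_vecMul, hg, smul_vecMul, hg, smul_smul, hσ.sq]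
  have h4 : g ^ (2 ^ 2) = (g * g) * (g * g) := by
    rw [← pow_two, ← pow_two, ← pow_mul]
    norm_num
  rw [h4]
  apply GL_ext_ev
  intro i
  rw [Units.val_mul, ← vecMul_vecMul, h2, smul_vecMul, h2, smul_smul, Units.val_one, vecMul_one]
  have : ε i * ε (σ i) * (ε i * ε (σ i)) = 1 := by
    linear_combination (ε (σ i) * ε (σ i)) * hε i + hε (σ i)
  rw [this, one_smul]

lemma PZ_iso (b : Fin n → F) (β : F) (hb : ∀ i : Fin n, i.1 + 1 < n → b i = β)
    {g : GL (Fin n) F} (hg : g ∈ PZ F n) : IsIso b g := by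
  obtain ⟨σ, ε, hσ, hε, hg⟩ := hg
  intro x
  have h1 : ∀ i, (x ᵥ* (g : Matrix (Fin n) (Fin n) F)) (σ i) = x i * ε i := by
    intro i
    rw [vecMul, dotProduct, Fintype.sum_eq_single i]
    · rw [entry_eq (g : Matrix (Fin n) (Fin n) F) i, hg, Pi.smul_apply, ev_same, smul_eq_mul, mul_one]
    · intro k hk
      rw [entry_eq (g : Matrix (Fin n) (Fin n) F) k, hg, Pi.smul_apply, ev_ne (fun h => hk (σ.injective h).symm), smul_zero,
        mul_zero]
  rw [dform_apply, dform_apply, ← Equiv.sum_comp σ]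
  apply Finset.sum_congr rfl
  intro i _
  have hbi : b (σ i) = b i := by
    by_cases h : σ i = i
    · rw [h]
    · have hgi := (hσ i).2 h
      have hgs := good_of_blk hgi (hσ i).1
      unfold goodIdx at hgi hgs
      rw [hb _ (by omega), hb _ (by omega)]
  rw [h1, hbi]
  linear_combination (b i * x i * x i) * hε i

/-- Reflections as elements of GL. -/
lemma exists_refl (b v : Fin n → F) (hv : dform b v v ≠ 0) :
    ∃ r : GL (Fin n) F, (∀ x, x ᵥ* (r : Matrix (Fin n) (Fin n) F) =
      x - (2 * dform b v x / dform b v v) • v) ∧ r⁻¹ = r ∧ IsIso b r := by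
  obtain ⟨r, h1, h2⟩ := exists_GL (reflEquiv (dform b) v hv)
  refine ⟨r, h1, ?_, ?_⟩
  · apply GL_ext_ev
    intro i
    rw [h1, h2]
    rfl
  · intro x
    rw [h1]
    exact refl_isom (dform b) (dform_symm b) v hv x x

lemma refl_ev_mem (h2 : (2 : F) ≠ 0) (b : Fin n → F) (hb0 : ∀ i, b i ≠ 0) (i : Fin n)
    (r : GL (Fin n) F) (hr : ∀ x, x ᵥ* (r : Matrix (Fin n) (Fin n) F) =
      x - (2 * dform b (ev F i) x / dform b (ev F i) (ev F i)) • ev F i) : r ∈ PZ F n := by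
  refine ⟨1, fun k => if k = i then -1 else 1, fun i => ⟨rfl, fun h => absurd rfl h⟩,
    fun k => by
      change (if k = i then (-1 : F) else 1) * (if k = i then -1 else 1) = 1
      split_ifs <;> ring, fun k => ?_⟩
  rw [hr, dform_ev_left, dform_ev_left, ev_same, mul_one, Equiv.Perm.one_apply]
  beta_reduce
  by_cases hk : k = i
  · subst hk
    rw [if_pos rfl, ev_same, mul_one, mul_div_assoc, div_self (hb0 k)]
    module
  · rw [if_neg hk, ev_ne (Ne.symm hk)]
    simp

lemma refl_sub_mem (h2 : (2 : F) ≠ 0) (b : Fin n → F) (hb0 : ∀ i, b i ≠ 0) (β : F)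
    (hb : ∀ i : Fin n, i.1 + 1 < n → b i = β) (i j : Fin n) (hi : goodIdx i) (hji : j ≠ i)
    (hj : blk j = blk i) :
    dform b (ev F i - ev F j) (ev F i - ev F j) ≠ 0 ∧
    ∀ (r : GL (Fin n) F), (∀ x, x ᵥ* (r : Matrix (Fin n) (Fin n) F) =
      x - (2 * dform b (ev F i - ev F j) x / dform b (ev F i - ev F j) (ev F i - ev F j)) •
        (ev F i - ev F j)) → r ∈ PZ F n := by
  have hgj := good_of_blk hi hj
  have hbi : b i = β := hb i (by unfold goodIdx at hi; omega)
  have hbj : b j = β := hb j (by unfold goodIdx at hgj; omega)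
  have hβ : β ≠ 0 := hbi ▸ hb0 i
  have hN : dform b (ev F i - ev F j) (ev F i - ev F j) = 2 * β := by
    rw [map_sub, map_sub, LinearMap.sub_apply, LinearMap.sub_apply, dform_ev_right, dform_ev_right,
      dform_ev_right, dform_ev_right, ev_same, ev_same, ev_ne hji, ev_ne hji.symm, hbi, hbj]
    ring
  refine ⟨by rw [hN]; exact mul_ne_zero h2 hβ, fun r hr => ?_⟩
  refine ⟨Equiv.swap i j, fun _ => 1, fun k => ?_, fun k => one_mul 1, fun k => ?_⟩
  · by_cases hk : k = i
    · subst hk; rw [Equiv.swap_apply_left]; exact ⟨hj, fun _ => hi⟩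
    by_cases hk' : k = j
    · subst hk'; rw [Equiv.swap_apply_right]; exact ⟨hj.symm, fun _ => hgj⟩
    rw [Equiv.swap_apply_of_ne_of_ne hk hk']
    exact ⟨rfl, fun h => absurd rfl h⟩
  · rw [hr, hN, dform_ev_right, Pi.sub_apply, one_smul]
    by_cases hk : k = i
    · subst hk
      rw [Equiv.swap_apply_left, ev_same, ev_ne hji.symm, hbi, sub_zero, mul_one,
        div_self (mul_ne_zero h2 hβ)]
      module
    by_cases hk' : k = j
    · subst hk'
      rw [Equiv.swap_apply_right, ev_same, ev_ne hji, hbj, zero_sub, mul_neg, mul_one, mul_neg,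
        neg_div, div_self (mul_ne_zero h2 hβ)]
      module
    rw [Equiv.swap_apply_of_ne_of_ne hk hk', ev_ne hk, ev_ne hk']
    simp

/-- The cyclic shift as a function. -/
def shiftFun (n : ℕ) (hn : 7 ≤ n) (i : Fin n) : Fin n :=
  if h : i.1 = 0 then ⟨n - 2, by omega⟩ else if h : i.1 + 1 < n then ⟨i.1 - 1, by omega⟩ else i

lemma shiftFun_val (hn : 7 ≤ n) (i : Fin n) : (shiftFun n hn i).1 =
    if i.1 = 0 then n - 2 else if i.1 + 1 < n then i.1 - 1 else i.1 := by
  unfold shiftFun; split_ifs <;> rfl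

lemma shiftFun_inj (hn : 7 ≤ n) : Function.Injective (shiftFun n hn) := by
  intro i j h
  have h1 := congrArg Fin.val h
  rw [shiftFun_val, shiftFun_val] at h1
  apply Fin.ext
  have := i.2
  have := j.2
  split_ifs at h1 <;> omega

lemma blk_shift (hn : 7 ≤ n) (i : Fin n) : blk (shiftFun n hn i) = blk1 i := by
  unfold blk blk1
  rw [shiftFun_val]
  have := i.2
  split_ifs <;> omega

lemma exists_shift (hn : 7 ≤ n) (b : Fin n → F) (β : F)
    (hb : ∀ i : Fin n, i.1 + 1 < n → b i = β) :
    ∃ x : GL (Fin n) F, IsIso b x ∧ ∀ g : GL (Fin n) F,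
      PresB blk ((x * g * x⁻¹ : GL (Fin n) F) : Matrix (Fin n) (Fin n) F) →
      PresB blk1 (g : Matrix (Fin n) (Fin n) F) := by
  let e : Equiv.Perm (Fin n) := Equiv.ofBijective (shiftFun n hn)
    (Finite.injective_iff_bijective.mp (shiftFun_inj hn))
  have he : ∀ i, e i = shiftFun n hn i := fun i => rfl
  obtain ⟨x, h1, h2⟩ := exists_GL (LinearEquiv.funCongrLeft F F e)
  have h1' : ∀ v : Fin n → F, v ᵥ* (x : Matrix (Fin n) (Fin n) F) = fun i => v (e i) :=
    fun v => h1 v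
  have h2' : ∀ v : Fin n → F, v ᵥ* ((x⁻¹ : GL (Fin n) F) : Matrix (Fin n) (Fin n) F) =
      fun i => v (e.symm i) :=
    fun v => h2 v
  refine ⟨x, ?_, ?_⟩
  · intro v
    rw [h1', dform_apply, dform_apply, ← Equiv.sum_comp e (fun i => b i * v i * v i)]
    apply Finset.sum_congr rfl
    intro i _
    have : b (e i) = b i := by
      rw [he]
      by_cases hi : i.1 + 1 < n
      · rw [hb i hi, hb]
        rw [shiftFun_val]
        split_ifs <;> omega
      · congr 1
        apply Fin.ext
        rw [shiftFun_val, if_neg (by omega), if_neg hi]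
    rw [this]
  · intro g hP
    have hent : ∀ i j, ((x * g * x⁻¹ : GL (Fin n) F) : Matrix (Fin n) (Fin n) F) (e i) (e j) =
        (g : Matrix (Fin n) (Fin n) F) i j := by
      intro i j
      have hev : (fun k => ev F (e i) (e k)) = ev F i := by
        funext k
        by_cases hk : k = i
        · subst hk; rw [ev_same, ev_same]
        · rw [ev_ne hk, ev_ne (fun h => hk (e.injective h))]
      rw [entry_eq ((x * g * x⁻¹ : GL (Fin n) F) : Matrix (Fin n) (Fin n) F) (e i), Units.val_mul, Units.val_mul, ← vecMul_vecMul, ← vecMul_vecMul, h1',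
        h2', hev, ev_vecMul]
      beta_reduce
      rw [Equiv.symm_apply_apply]
    intro i i' j j' hi hj hj'
    have := hP (e i) (e i') (e j) (e j') (by rw [he, he, blk_shift, blk_shift, hi])
      (by rw [hent]; exact hj) (by rw [hent]; exact hj')
    rwa [he, he, blk_shift, blk_shift] at this

lemma IsIso.bilin (h2 : (2 : F) ≠ 0) {b : Fin n → F} {G : Matrix (Fin n) (Fin n) F} {c : F}
    (h : ∀ x, dform b (x ᵥ* G) (x ᵥ* G) = c * dform b x x) (x y : Fin n → F) :
    dform b (x ᵥ* G) (y ᵥ* G) = c * dform b x y := by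
  have h1 := h (x + y)
  rw [add_vecMul] at h1
  simp only [map_add, LinearMap.add_apply] at h1
  rw [h x, h y, dform_symm b (y ᵥ* G), dform_symm b y x] at h1
  apply mul_left_cancel₀ h2
  linear_combination h1

lemma IsIso.det (h2 : (2 : F) ≠ 0) {b : Fin n → F} (hb : ∀ i, b i ≠ 0) {g : GL (Fin n) F}
    (h : IsIso b g) : (g : Matrix (Fin n) (Fin n) F).det = 1 ∨
      (g : Matrix (Fin n) (Fin n) F).det = -1 := by
  set G := (g : Matrix (Fin n) (Fin n) F) with hG
  have h1 : G * diagonal b * Gᵀ = diagonal b := by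
    ext i j
    have := IsIso.bilin h2 (c := 1) (fun x => by rw [h x, one_mul]) (ev F i) (ev F j)
    rw [one_mul, ← hG, ev_vecMul, ev_vecMul, dform_apply, dform_ev_left] at this
    rw [Matrix.mul_apply, diagonal_apply]
    simp only [Matrix.mul_diagonal, transpose_apply]
    rw [← Finset.sum_congr rfl (fun k _ => show b k * G i k * G j k = G i k * b k * G j k by ring),
      this]
    by_cases hij : i = j
    · subst hij; rw [ev_same, if_pos rfl, mul_one]
    · rw [ev_ne hij, if_neg hij, mul_zero]
  have h3 := congrArg Matrix.det h1
  rw [det_mul, det_mul, det_transpose, det_diagonal] at h3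
  have hne : ∏ i, b i ≠ 0 := Finset.prod_ne_zero_iff.mpr (fun i _ => hb i)
  have h4 : (G.det - 1) * (G.det + 1) = 0 := by
    apply mul_right_cancel₀ hne
    linear_combination h3
  rcases mul_eq_zero.mp h4 with h | h
  · left; linear_combination h
  · right; linear_combination h

lemma refl_ev_det (b : Fin n → F) (hb0 : ∀ i, b i ≠ 0) (i : Fin n)
    (r : GL (Fin n) F) (hr : ∀ x, x ᵥ* (r : Matrix (Fin n) (Fin n) F) =
      x - (2 * dform b (ev F i) x / dform b (ev F i) (ev F i)) • ev F i) :
    (r : Matrix (Fin n) (Fin n) F).det = -1 := by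
  have h : (r : Matrix (Fin n) (Fin n) F) = diagonal (fun k => if k = i then -1 else 1) := by
    ext k j
    rw [entry_eq (r : Matrix (Fin n) (Fin n) F) k, hr, dform_ev_left, dform_ev_left, ev_same, mul_one, diagonal_apply]
    by_cases hk : k = i
    · subst hk
      rw [ev_same, mul_one, mul_div_assoc, div_self (hb0 k)]
      by_cases hkj : k = j
      · subst hkj; simp [ev_same]; ring
      · simp [ev_ne (Ne.symm hkj), hkj]
    · rw [ev_ne (Ne.symm hk)]
      by_cases hkj : k = j
      · subst hkj; simp [ev_same, hk]
      · simp [ev_ne (Ne.symm hkj), hkj]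
  rw [h, det_diagonal, Fintype.prod_eq_single i]
  · simp
  · intro j hj; simp [hj]

lemma refl_eq_reflM (b : Fin n → F) (S : Finset (Fin n))
    (r : GL (Fin n) F) (hr : ∀ x, x ᵥ* (r : Matrix (Fin n) (Fin n) F) =
      x - (2 * dform b (ind S) x / dform b (ind S) (ind S)) • ind S) :
    (r : Matrix (Fin n) (Fin n) F) =
      reflM (fun i => 2 * (b i * ind S i) / dform b (ind S) (ind S)) S := by
  ext i j
  rw [entry_eq (r : Matrix (Fin n) (Fin n) F) i, hr, dform_ev_right, reflM, Matrix.sub_apply, vecMulVec_apply]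
  simp only [Pi.sub_apply, Pi.smul_apply, smul_eq_mul]
  congr 1
  by_cases hij : j = i
  · subst hij; rw [ev_same, Matrix.one_apply_eq]
  · rw [ev_ne hij, Matrix.one_apply_ne (Ne.symm hij)]

lemma exists_set (b : Fin n → F) (hb : ∀ i, b i ≠ 0) (s t : Fin n) (hst : s ≠ t) :
    ∃ S : Finset (Fin n), dform b (ind S) (ind S) ≠ 0 ∧
      ((∀ i, i ∈ S ↔ i ≠ s) ∨ (∀ i, i ∈ S ↔ i ≠ s ∧ i ≠ t)) := by
  classical
  have hsum : ∀ S : Finset (Fin n), dform b (ind S) (ind S) = ∑ i ∈ S, b i := by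
    intro S
    rw [dform_apply, ← Finset.sum_filter_add_sum_filter_not Finset.univ (· ∈ S)]
    rw [Finset.sum_eq_zero (s := Finset.univ.filter (¬ · ∈ S))]
    · rw [add_zero]
      refine Finset.sum_congr (by ext; simp) ?_
      intro i hi
      simp [ind, hi]
    · intro i hi
      simp only [Finset.mem_filter] at hi
      simp [ind, hi.2]
  by_cases h : ∑ i ∈ Finset.univ.erase s, b i = 0
  · refine ⟨(Finset.univ.erase s).erase t, ?_, Or.inr fun i => by simp; tauto⟩
    rw [hsum]
    intro h'
    have := Finset.add_sum_erase (Finset.univ.erase s) b (a := t) (by simp [hst.symm])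
    rw [h, h', add_zero] at this
    exact hb t this
  · exact ⟨Finset.univ.erase s, by rw [hsum]; exact h, Or.inl fun i => by simp⟩

end PZero
section Final

variable {F : Type*} [Field F] {n : ℕ}

lemma conj_into {G : Type*} [Group G] [Finite G] (M H L : Subgroup G) (hHM : H ≤ M) (hLM : L ≤ M)
    (hL : IsPGroup 2 L) (hidx : ¬ 2 ∣ H.relIndex M) :
    ∃ u ∈ M, ∀ g ∈ L, u⁻¹ * g * u ∈ H := by
  have : Fact (Nat.Prime 2) := ⟨Nat.prime_two⟩
  have hL' : IsPGroup 2 (L.subgroupOf M) := hL.of_injective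
    (Subgroup.subgroupOfEquivOfLe hLM).toMonoidHom (Subgroup.subgroupOfEquivOfLe hLM).injective
  obtain ⟨a, ha⟩ := hL'.nonempty_fixed_point_of_prime_not_dvd_card (M ⧸ H.subgroupOf M) hidx
  obtain ⟨u, rfl⟩ := QuotientGroup.mk_surjective a
  refine ⟨u, u.2, fun g hg => ?_⟩
  have h1 := ha ⟨⟨g, hLM hg⟩, hg⟩
  have h2 : ((⟨g, hLM hg⟩ * u : M) : M ⧸ H.subgroupOf M) = (u : M ⧸ H.subgroupOf M) := h1
  have h3 := QuotientGroup.eq.mp h2.symm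
  rw [Subgroup.mem_subgroupOf] at h3
  simpa [mul_assoc] using h3

theorem core (hn : 7 ≤ n) (h2 : (2 : F) ≠ 0) (K : Subgroup (GL (Fin n) F)) (b : Fin n → F) (β : F)
    (hb : ∀ i : Fin n, i.1 + 1 < n → b i = β) (S : Setting K b) :
    ∃ x y z : GL (Fin n) F, IsIso b x ∧ IsIso b y ∧ IsIso b z ∧ ∀ g ∈ K, x * g * x⁻¹ ∈ K →
      y * g * y⁻¹ ∈ K → z * g * z⁻¹ ∈ K →
      ∃ c : F, (g : Matrix (Fin n) (Fin n) F) = c • (1 : Matrix (Fin n) (Fin n) F) := by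
  obtain ⟨x, hx, hx'⟩ := exists_shift hn b β hb
  obtain ⟨S₁, hN₁, hS₁⟩ := exists_set b S.b_ne ⟨0, by omega⟩ ⟨2, by omega⟩ (by simp)
  obtain ⟨S₂, hN₂, hS₂⟩ := exists_set b S.b_ne ⟨1, by omega⟩ ⟨3, by omega⟩ (by simp)
  obtain ⟨y, hy, hyi, hyI⟩ := exists_refl b (ind S₁) hN₁
  obtain ⟨z, hz, hzi, hzI⟩ := exists_refl b (ind S₂) hN₂
  have hyM := refl_eq_reflM b S₁ y hy
  have hzM := refl_eq_reflM b S₂ z hz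
  have hpres : ∀ g ∈ K, PresB blk (g : Matrix (Fin n) (Fin n) F) :=
    fun g hg i i' j j' hi hj hj' => S.pres hg hi hj hj'
  refine ⟨x, y, z, hx, hyI, hzI, fun g hg hgx hgy hgz => ?_⟩
  have hy' := hpres _ hgy
  have hz' := hpres _ hgz
  rw [hyi, Units.val_mul, Units.val_mul, hyM] at hy'
  rw [hzi, Units.val_mul, Units.val_mul, hzM] at hz'
  have hal0 : ∀ (T : Finset (Fin n)) (N : F) (i : Fin n), i ∉ T →
      2 * (b i * (ind T i : F)) / N = 0 := by
    intro T N i hi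
    simp [ind, hi]
  have hal1 : ∀ (T : Finset (Fin n)) (N : F) (_ : N ≠ 0) (i : Fin n), i ∈ T →
      2 * (b i * (ind T i : F)) / N ≠ 0 := by
    intro T N hN i hi
    simp [ind, hi, h2, hN, S.b_ne i]
  refine thmB hn h2 g (hpres g hg) (hx' g (hpres _ hgx)) _ _ S₁ S₂ (hal0 S₁ _) (hal1 S₁ _ hN₁)
    (hal0 S₂ _) (hal1 S₂ _ hN₂) ?_ ?_ hy' hz'
  · simpa [Fin.ext_iff] using hS₁
  · intro i h1 h3
    rcases hS₂ with h | h
    · rw [h]; simpa [Fin.ext_iff] using h1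
    · rw [h]; exact ⟨by simpa [Fin.ext_iff] using h1, by simpa [Fin.ext_iff] using h3⟩

theorem setting_of (h2 : (2 : F) ≠ 0) (K : Subgroup (GL (Fin n) F)) [Finite K]
    [Group.IsSolvable K] (h3 : ¬ 3 ∣ Nat.card K) (hp : (Nat.card K : F) ≠ 0)
    (b : Fin n → F) (hb0 : ∀ i, b i ≠ 0) (β : F)
    (hb : ∀ i : Fin n, i.1 + 1 < n → b i = β) (hPZ : PZ F n ≤ K)
    (hsim : ∀ g ∈ K, ∃ c : F, c ≠ 0 ∧ ∀ x : Fin n → F,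
      dform b (x ᵥ* (g : Matrix (Fin n) (Fin n) F)) (x ᵥ* (g : Matrix (Fin n) (Fin n) F)) =
        c * dform b x x) : Setting K b where
  b_ne := hb0
  noTriple := fun v1 v2 v3 hli r1 r2 r3 h12 h23 =>
    triple K h3 hp (dform b) (dform_symm b) h2 v1 v2 v3 hli r1 r2 r3 h12 h23
  root_ev := fun i => by
    have hN : dform b (ev F i) (ev F i) ≠ 0 := by
      rw [dform_ev_left, ev_same, mul_one]; exact hb0 i
    obtain ⟨r, hr, -, -⟩ := exists_refl b (ev F i) hN
    exact ⟨hN, r, hPZ (refl_ev_mem h2 b hb0 i r hr), hr⟩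
  root_sub := fun i j hi hji hj => by
    obtain ⟨hN, hm⟩ := refl_sub_mem h2 b hb0 β hb i j hi hji hj
    obtain ⟨r, hr, -, -⟩ := exists_refl b _ hN
    exact ⟨hN, r, hPZ (hm r hr), hr⟩
  sim := fun g hg => by
    obtain ⟨c, hc, h⟩ := hsim g hg
    exact ⟨c, hc, IsIso.bilin h2 h⟩

end Final
lemma trans_iso {F : Type*} [Field F] {n : ℕ} (Q : (Fin n → F) → F) (T : GL (Fin n) F)
    (b : Fin n → F) (hQ : ∀ x, Q (x ᵥ* (T : Matrix (Fin n) (Fin n) F)) = dform b x x)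
    {g : GL (Fin n) F} (hg : IsIso b g) (v : Fin n → F) :
    Q (v ᵥ* ((T⁻¹ * g * T : GL (Fin n) F) : Matrix (Fin n) (Fin n) F)) = Q v := by
  rw [Units.val_mul, Units.val_mul, ← vecMul_vecMul, ← vecMul_vecMul, hQ, hg, ← hQ, vecMul_vecMul,
    ← Units.val_mul, inv_mul_cancel, Units.val_one, vecMul_one]

theorem stmt8 (p f q n : ℕ) (hp : p.Prime) (hpodd : p ≠ 2) (hf : 1 ≤ f) (hq : q = p ^ f)
    (F : Type) [Field F] [Fintype F] (hcard : Fintype.card F = q)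
    (hn : 7 ≤ n)
    (Q : QuadraticForm F (Fin n → F))
    (hnd : ∀ v : Fin n → F, (∀ w : Fin n → F, QuadraticMap.polar (⇑Q) v w = 0) → v = 0)
    (hnonsolv : ¬ IsSolvable ↥(qSimilitudeGroup (⇑Q : (Fin n → F) → F)))
    (π : Set ℕ) (hπ : ∀ r ∈ π, r.Prime) (h2pi : 2 ∈ π) (h3pi : 3 ∉ π) (hppi : p ∉ π)
    (H : Subgroup (GL (Fin n) F))
    (hH : IsHallSubgroupIn π (qSimilitudeGroup (⇑Q : (Fin n → F) → F)) H)
    (hsolv : IsSolvable ↥H)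
    :
    ∃ x y z : GL (Fin n) F,
      x ∈ (H : Set (GL (Fin n) F)) * ((qSimilitudeGroup (⇑Q : (Fin n → F) → F) ⊓ SLsub n F : Subgroup (GL (Fin n) F)) : Set (GL (Fin n) F)) ∧
      y ∈ (H : Set (GL (Fin n) F)) * ((qSimilitudeGroup (⇑Q : (Fin n → F) → F) ⊓ SLsub n F : Subgroup (GL (Fin n) F)) : Set (GL (Fin n) F)) ∧
      z ∈ (H : Set (GL (Fin n) F)) * ((qSimilitudeGroup (⇑Q : (Fin n → F) → F) ⊓ SLsub n F : Subgroup (GL (Fin n) F)) : Set (GL (Fin n) F)) ∧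
    ∀ g ∈ H ⊓ conjBy H x ⊓ conjBy H y ⊓ conjBy H z,
      ∃ c : F, (g : Matrix (Fin n) (Fin n) F) = c • (1 : Matrix (Fin n) (Fin n) F) := by
  classical
  have hFin : Finite (GL (Fin n) F) := inferInstance
  obtain ⟨hHM, hHpi, hHidx⟩ := hH
  have hsolvH : Group.IsSolvable H := hsolv
  have hfp : Fact p.Prime := ⟨hp⟩
  have hchar : CharP F p := by
    obtain ⟨r, hr⟩ := CharP.exists F
    obtain ⟨m, hrp, hm⟩ := FiniteField.card F r
    have h1 : r ∣ p ^ f := by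
      rw [← hq, ← hcard, hm]
      exact dvd_pow_self r m.pos.ne'
    have h3 : r = p := (Nat.prime_dvd_prime_iff_eq hrp hp).mp (hrp.dvd_of_dvd_pow h1)
    rw [← h3]
    exact hr
  have hp2 : ¬ p ∣ 2 := fun h => hpodd ((Nat.prime_dvd_prime_iff_eq hp Nat.prime_two).mp h)
  have h2 : (2 : F) ≠ 0 := by
    intro h
    exact hp2 ((CharP.cast_eq_zero_iff F p 2).mp (by exact_mod_cast h))
  have hodd : Fintype.card F % 2 = 1 := by
    rw [hcard, hq]
    exact Nat.odd_iff.mp ((hp.odd_of_ne_two hpodd).pow)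
  have hH3 : ¬ 3 ∣ Nat.card H := fun h => h3pi (hHpi 3 Nat.prime_three h)
  have hHp : (Nat.card H : F) ≠ 0 := by
    intro h
    exact hppi (hHpi p hp ((CharP.cast_eq_zero_iff F p _).mp h))
  obtain ⟨T, b, hb0, hb1, hQ⟩ := diag_form hodd h2 (by omega : 1 ≤ n) Q hnd
  -- a conjugate of the 2-group lies in H
  obtain ⟨u, huM, hu⟩ := conj_into (qSimilitudeGroup (⇑Q : (Fin n → F) → F)) H
    ((PZ F n).map (MulAut.conj T⁻¹).toMonoidHom) hHM
    (by
      rintro _ ⟨g, hg, rfl⟩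
      refine ⟨1, fun v => ?_⟩
      have := trans_iso (⇑Q) T b hQ (PZ_iso b 1 hb1 hg) v
      simpa using this)
    (PZ_isPGroup.map _) (hHidx 2 h2pi)
  obtain ⟨c, hc⟩ := huM
  set T' : GL (Fin n) F := T * u with hT'
  set b' : Fin n → F := fun i => (c : F) * b i with hb'
  have hb'0 : ∀ i, b' i ≠ 0 := fun i => mul_ne_zero c.ne_zero (hb0 i)
  have hb'1 : ∀ i : Fin n, i.1 + 1 < n → b' i = (c : F) := fun i hi => by
    rw [hb']
    beta_reduce
    rw [hb1 i hi, mul_one]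
  have hQ' : ∀ x, Q (x ᵥ* (T' : Matrix (Fin n) (Fin n) F)) = dform b' x x := by
    intro x
    rw [hT', Units.val_mul, ← vecMul_vecMul, hc, hQ, dform_apply, dform_apply, Finset.mul_sum]
    exact Finset.sum_congr rfl fun i _ => by rw [hb']; ring
  let K : Subgroup (GL (Fin n) F) := H.map (MulAut.conj T').toMonoidHom
  have hKmem : ∀ g : GL (Fin n) F, g ∈ K ↔ T'⁻¹ * g * T' ∈ H := by
    intro g
    constructor
    · rintro ⟨h, hh, rfl⟩
      have : T'⁻¹ * (MulAut.conj T').toMonoidHom h * T' = h := by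
        simp [mul_assoc]
      rw [this]
      exact hh
    · intro h
      exact ⟨_, h, by simp [mul_assoc]⟩
  let eHK : H ≃* K := H.equivMapOfInjective _ (MulAut.conj T').injective
  have hcardK : Nat.card K = Nat.card H := (Nat.card_congr eHK.toEquiv).symm
  have hsolvK : Group.IsSolvable K :=
    Group.isSolvable_of_surjective (f := eHK.toMonoidHom) eHK.surjective
  have hPZ : PZ F n ≤ K := by
    intro g hg
    rw [hKmem]
    have := hu (T⁻¹ * g * T) ⟨g, hg, by simp⟩
    rw [hT']
    simpa [mul_assoc] using this
  have S : Setting K b' := by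
    refine setting_of h2 K (by rw [hcardK]; exact hH3) (by rw [hcardK]; exact hHp) b' hb'0 _ hb'1
      hPZ ?_
    intro g hg
    obtain ⟨d, hd⟩ := hHM ((hKmem g).mp hg)
    refine ⟨d, d.ne_zero, fun x => ?_⟩
    have h1 := hd (x ᵥ* (T' : Matrix (Fin n) (Fin n) F))
    rw [vecMul_vecMul, ← Units.val_mul, show T' * (T'⁻¹ * g * T') = g * T' by group, Units.val_mul,
      ← vecMul_vecMul, hQ', hQ'] at h1
    exact h1
  obtain ⟨x, y, z, hx, hy, hz, hmain⟩ := core hn h2 K b' (c : F) hb'1 S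
  have hdetc : ∀ g : GL (Fin n) F,
      ((T'⁻¹ * g * T' : GL (Fin n) F) : Matrix (Fin n) (Fin n) F).det =
        (g : Matrix (Fin n) (Fin n) F).det := by
    intro g
    have h1 : (T' : Matrix (Fin n) (Fin n) F).det *
        ((T'⁻¹ : GL (Fin n) F) : Matrix (Fin n) (Fin n) F).det = 1 := by
      rw [← det_mul, ← Units.val_mul, mul_inv_cancel, Units.val_one, det_one]
    rw [Units.val_mul, Units.val_mul, det_mul, det_mul]
    linear_combination (g : Matrix (Fin n) (Fin n) F).det * h1
  -- isometries lie in the product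
  have hprod : ∀ g : GL (Fin n) F, IsIso b' g → T'⁻¹ * g * T' ∈ (H : Set (GL (Fin n) F)) *
      ((qSimilitudeGroup (⇑Q : (Fin n → F) → F) ⊓ SLsub n F : Subgroup (GL (Fin n) F)) :
        Set (GL (Fin n) F)) := by
    intro g hg
    have hgM : T'⁻¹ * g * T' ∈ qSimilitudeGroup (⇑Q : (Fin n → F) → F) :=
      ⟨1, fun v => by rw [trans_iso (⇑Q) T' b' hQ' hg v, Units.val_one, one_mul]⟩
    rcases hg.det h2 hb'0 with hd | hd
    · refine Set.mem_mul.mpr ⟨1, H.one_mem, T'⁻¹ * g * T', ⟨hgM, ?_⟩, one_mul _⟩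
      change Matrix.det _ = 1
      rw [hdetc, hd]
    · have hN : dform b' (ev F (⟨0, by omega⟩ : Fin n)) (ev F (⟨0, by omega⟩ : Fin n)) ≠ 0 := by
        rw [dform_ev_left, ev_same, mul_one]; exact hb'0 _
      obtain ⟨r, hr, -, -⟩ := exists_refl b' _ hN
      have hrK := hPZ (refl_ev_mem h2 b' hb'0 _ r hr)
      have hrH := (hKmem r).mp hrK
      have hrd := refl_ev_det b' hb'0 _ r hr
      refine Set.mem_mul.mpr ⟨T'⁻¹ * r * T', hrH, (T'⁻¹ * r * T')⁻¹ * (T'⁻¹ * g * T'),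
        ⟨Subgroup.mul_mem _ (Subgroup.inv_mem _ (hHM hrH)) hgM, ?_⟩, mul_inv_cancel_left _ _⟩
      change Matrix.det _ = 1
      have h5 : (((T'⁻¹ * r * T') * ((T'⁻¹ * r * T')⁻¹ * (T'⁻¹ * g * T')) : GL (Fin n) F) :
          Matrix (Fin n) (Fin n) F).det = -1 := by
        rw [mul_inv_cancel_left, hdetc, hd]
      rw [Units.val_mul, det_mul, hdetc, hrd] at h5
      linear_combination -h5
  refine ⟨T'⁻¹ * x * T', T'⁻¹ * y * T', T'⁻¹ * z * T', hprod x hx, hprod y hy, hprod z hz, ?_⟩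
  rintro g ⟨⟨⟨hg, hgx⟩, hgy⟩, hgz⟩
  have hconj : ∀ w : GL (Fin n) F, g ∈ conjBy H (T'⁻¹ * w * T') →
      w * (T' * g * T'⁻¹) * w⁻¹ ∈ K := by
    rintro w ⟨h, hh, rfl⟩
    rw [hKmem]
    have : T'⁻¹ * (w * (T' * (MulAut.conj (T'⁻¹ * w * T')⁻¹).toMonoidHom h * T'⁻¹) * w⁻¹) * T' =
        h := by
      simp [mul_assoc]
    rw [this]
    exact hh
  obtain ⟨d, hd⟩ := hmain (T' * g * T'⁻¹) ((hKmem _).mpr (by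
    have : T'⁻¹ * (T' * g * T'⁻¹) * T' = g := by group
    rw [this]; exact hg)) (hconj x hgx) (hconj y hgy) (hconj z hgz)
  refine ⟨d, ?_⟩
  have h6 : (g : Matrix (Fin n) (Fin n) F) = ((T'⁻¹ : GL (Fin n) F) : Matrix (Fin n) (Fin n) F) *
      ((T' * g * T'⁻¹ : GL (Fin n) F) : Matrix (Fin n) (Fin n) F) *
        (T' : Matrix (Fin n) (Fin n) F) := by
    rw [← Units.val_mul, ← Units.val_mul]
    congr 1
    group
  rw [h6, hd, Matrix.mul_smul, Matrix.smul_mul, mul_one, ← Units.val_mul, inv_mul_cancel,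
    Units.val_one]
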